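/- Let A be a piecewise-Koszul algebra with period p = 3 and jump degree d. Then for every integer k ≥ 1, the algebra E_k(A) = ⊕_{n≥0} Ext^{3kn}_A(A_0,A_0), graded with n-th component Ext^{3kn}_A(A_0,A_0) and multiplication the Yoneda product, is a Koszul algebra: its degree-zero part admits a minimal graded projective resolution over E_k(A) whose n-th term is generated in degree n. -/

import Mathlib

noncomputable section

/-- The jump function `δ^d_p(n) = ((n − (n mod p))/p)·d + (n mod p)`. -/
def jump (d p n : ℕ) : ℕ := (n - n % p) / p * d + n % p

/-- A positively graded `F`-algebra `A = ⊕_{i≥0} A_i`. -/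
structure GradedAlg (F : Type) [Field F] where
  A : Type
  [ringA : Ring A]
  [algA : Algebra F A]
  grading : ℕ → Submodule F A
  [graded : GradedAlgebra grading]

attribute [instance] GradedAlg.ringA GradedAlg.algA GradedAlg.graded

namespace GradedAlg

variable {F : Type} [Field F] (𝒜 : GradedAlg F)

/-- The graded Jacobson radical `J = ⊕_{i≥1} A_i`, i.e. the irrelevant ideal. -/
def jideal : Ideal 𝒜.A := (HomogeneousIdeal.irrelevant 𝒜.grading).toIdeal

/-- The standing assumptions: `A_0` is a semisimple Artin algebra, `A` is generated in
degrees 0 and 1 (`A_i · A_j = A_{i+j}`), and `A_1` is finite dimensional over `F`. -/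
structure Standing : Prop where
  semisimple : IsSemisimpleRing ↥(𝒜.grading 0)
  artinian : IsArtinianRing ↥(𝒜.grading 0)
  gen01 : ∀ i j : ℕ, 𝒜.grading i * 𝒜.grading j = 𝒜.grading (i + j)
  findim : FiniteDimensional F ↥(𝒜.grading 1)

/-- A (ℤ-)graded module over the graded algebra `𝒜`. -/
structure GMod where
  M : Type
  [acg : AddCommGroup M]
  [modF : Module F M]
  [modA : Module 𝒜.A M]
  [tower : IsScalarTower F 𝒜.A M]
  [scomm : SMulCommClass 𝒜.A F M]
  grading : ℤ → Submodule F M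
  sup_eq_top : (⨆ j : ℤ, grading j) = ⊤
  indep : iSupIndep grading
  smul_mem : ∀ {i : ℕ} {j : ℤ} {a : 𝒜.A} {m : M},
    a ∈ 𝒜.grading i → m ∈ grading j → a • m ∈ grading ((i : ℤ) + j)

attribute [instance] GMod.acg GMod.modF GMod.modA GMod.tower GMod.scomm

variable {𝒜}

/-- A degree-zero morphism of graded modules. -/
structure GHom (M N : 𝒜.GMod) where
  lin : M.M →ₗ[𝒜.A] N.M
  grad : ∀ (j : ℤ) (x : M.M), x ∈ M.grading j → lin x ∈ N.grading j

/-- A graded module is generated in degree `s` if `A · M_s = M`. -/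
def GMod.GenInDeg (M : 𝒜.GMod) (s : ℤ) : Prop :=
  Submodule.span 𝒜.A (M.grading s : Set M.M) = ⊤

/-- `T` is the trivial graded module `A_0 = A/J`, concentrated in degree `0`. -/
def IsTrivialGMod (T : 𝒜.GMod) : Prop :=
  (∀ j : ℤ, j ≠ 0 → T.grading j = ⊥) ∧
    Nonempty (T.M ≃ₗ[𝒜.A] (𝒜.A ⧸ 𝒜.jideal))

/-- A minimal graded projective resolution
`⋯ → P_{n+1} → P_n → ⋯ → P_0 → M → 0` of the graded module `M`,
with finitely generated terms. -/
structure MinRes (M : 𝒜.GMod) where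
  P : ℕ → 𝒜.GMod
  d : ∀ n : ℕ, GHom (P (n + 1)) (P n)
  aug : GHom (P 0) M
  fg : ∀ n, Module.Finite 𝒜.A (P n).M
  projective : ∀ n, Module.Projective 𝒜.A (P n).M
  aug_surj : Function.Surjective aug.lin
  exact_aug : LinearMap.range (d 0).lin = LinearMap.ker aug.lin
  exact : ∀ n, LinearMap.range (d (n + 1)).lin = LinearMap.ker (d n).lin
  minimal : ∀ n, LinearMap.range (d n).lin ≤ 𝒜.jideal • (⊤ : Submodule 𝒜.A (P n).M)

variable (𝒜)

/-- `M` is a piecewise-Koszul module (period `p`, jump degree `d`, shift `s`):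
it has a minimal graded projective resolution with `P_n` generated in degree `δ^d_p(n) + s`. -/
def IsPKMod (p d : ℕ) (s : ℤ) (M : 𝒜.GMod) : Prop :=
  ∃ R : MinRes M, ∀ n : ℕ, (R.P n).GenInDeg ((jump d p n : ℤ) + s)

/-- `A` is a piecewise-Koszul algebra (period `p`, jump degree `d`): the trivial module `T`
admits a minimal graded projective resolution with `P_n` generated in degree `δ^d_p(n)`. -/
def IsPKAlg (p d : ℕ) (T : 𝒜.GMod) : Prop := IsPKMod 𝒜 p d 0 T

/-- A Koszul module: a minimal graded projective resolution with `P_n` generated in degree `n`. -/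
def IsKoszulMod (M : 𝒜.GMod) : Prop :=
  ∃ R : MinRes M, ∀ n : ℕ, (R.P n).GenInDeg (n : ℤ)

variable {𝒜}

section Ext

variable (T : 𝒜.GMod) {M : 𝒜.GMod}

/-- The space of `A`-linear maps `P_n → T` (cochains). -/
abbrev HomSp (R : MinRes M) (n : ℕ) := (R.P n).M →ₗ[𝒜.A] T.M

/-- Precomposition, as an `F`-linear map on cochains. -/
def precompF {M₁ M₂ : 𝒜.GMod} (g : M₁.M →ₗ[𝒜.A] M₂.M) :
    (M₂.M →ₗ[𝒜.A] T.M) →ₗ[F] (M₁.M →ₗ[𝒜.A] T.M) where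
  toFun f := f ∘ₗ g
  map_add' f₁ f₂ := by ext x; simp
  map_smul' c f := by ext x; simp

/-- Cocycles: maps `P_n → T` vanishing on the image of `P_{n+1}`. -/
def cocyc (R : MinRes M) (n : ℕ) : Submodule F (HomSp T R n) :=
  LinearMap.ker (precompF T (R.d n).lin)

/-- Coboundaries: maps `P_n → T` factoring through `d_{n-1}`. -/
def cobound (R : MinRes M) : (n : ℕ) → Submodule F (HomSp T R n)
  | 0 => ⊥
  | n + 1 => LinearMap.range (precompF T (R.d n).lin)

/-- The coboundaries, viewed inside the cocycles. -/
def extRel (R : MinRes M) (n : ℕ) : Submodule F ↥(cocyc T R n) :=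
  (cobound T R n).comap (cocyc T R n).subtype

/-- `Ext^n_A(M, T)`, computed from the resolution `R` of `M`. -/
abbrev ExtQ (R : MinRes M) (n : ℕ) := ↥(cocyc T R n) ⧸ extRel T R n

/-- The class in `Ext^n_A(M,T)` of a cocycle. -/
def extCls {R : MinRes M} {n : ℕ} {f : HomSp T R n} (hf : f ∈ cocyc T R n) :
    ExtQ T R n :=
  Submodule.Quotient.mk ⟨f, hf⟩

/-- Cochains of shift-degree `j`: maps `P_n → T` vanishing on every `(P_n)_i` with `i ≠ j`. -/
def homDeg (R : MinRes M) (n : ℕ) (j : ℤ) : Submodule F (HomSp T R n) where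
  carrier := {f | ∀ i : ℤ, i ≠ j → ∀ x ∈ (R.P n).grading i, f x = 0}
  add_mem' := fun hf hg i hi x hx => by
    simp only [LinearMap.add_apply, hf i hi x hx, hg i hi x hx, add_zero]
  zero_mem' := fun i hi x hx => rfl
  smul_mem' := fun c f hf i hi x hx => by
    simp only [LinearMap.smul_apply, hf i hi x hx, smul_zero]

/-- The shift-degree `j` component `Ext^n_A(M,T)_j`. -/
def extComp (R : MinRes M) (n : ℕ) (j : ℤ) : Submodule F (ExtQ T R n) :=
  Submodule.map (extRel T R n).mkQ ((homDeg T R n j).comap (cocyc T R n).subtype)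

/-- Transport `Ext` along an equality of cohomological degrees. -/
def extCast (R : MinRes M) {a b : ℕ} (h : a = b) : ExtQ T R a ≃ₗ[F] ExtQ T R b :=
  h ▸ LinearEquiv.refl F (ExtQ T R a)

/-- A chain map lifting of a cochain `g : P_j → T` over the resolutions `RM` of `M`
and `RT` of `T`. -/
structure ChainLift (RT : MinRes T) (RM : MinRes M) (j : ℕ)
    (g : (RM.P j).M →ₗ[𝒜.A] T.M) where
  ℓ : ∀ m k : ℕ, m = k + j → ((RM.P m).M →ₗ[𝒜.A] (RT.P k).M)
  comm_aug : RT.aug.lin ∘ₗ ℓ j 0 (by omega) = g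
  comm : ∀ k : ℕ, (RT.d k).lin ∘ₗ ℓ (k + j + 1) (k + 1) (by omega) =
    ℓ (k + j) k rfl ∘ₗ (RM.d (k + j)).lin

/-- `μ` is the (bigraded family of) Yoneda product(s)
`Ext^i(T,T) ⊗ Ext^j(M,T) → Ext^{i+j}(M,T)`: it is computed by composing a cocycle
`f : P_i → T` with a chain lifting of a cocycle `g : Q_j → T`. -/
def IsYonedaMul (RT : MinRes T) (RM : MinRes M)
    (μ : ∀ i j : ℕ, ExtQ T RT i →ₗ[F] ExtQ T RM j →ₗ[F] ExtQ T RM (i + j)) : Prop :=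
  ∀ (i j : ℕ) (f : HomSp T RT i) (hf : f ∈ cocyc T RT i)
    (g : HomSp T RM j) (hg : g ∈ cocyc T RM j)
    (L : ChainLift T RT RM j g)
    (hc : f ∘ₗ L.ℓ (i + j) i (by omega) ∈ cocyc T RM (i + j)),
    μ i j (extCls T hf) (extCls T hg) = extCls T hc

/-- `E(A) = Ext^*_A(A_0,A_0)` is generated in the ext-degrees belonging to `S`. -/
def ExtGenIn (RT : MinRes T)
    (μ : ∀ i j : ℕ, ExtQ T RT i →ₗ[F] ExtQ T RT j →ₗ[F] ExtQ T RT (i + j))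
    (S : Set ℕ) : Prop :=
  ∀ W : (n : ℕ) → Submodule F (ExtQ T RT n),
    (∀ n ∈ S, W n = ⊤) →
    (∀ (i j : ℕ) (x : ExtQ T RT i) (y : ExtQ T RT j),
      x ∈ W i → y ∈ W j → μ i j x y ∈ W (i + j)) →
    ∀ n, W n = ⊤

/-- `E(M) = Ext^*_A(M,A_0)` is generated in degree `0` as a graded `E(A)`-module. -/
def ExtModGenInZero (RT : MinRes T) (RM : MinRes M)
    (μ : ∀ i j : ℕ, ExtQ T RT i →ₗ[F] ExtQ T RM j →ₗ[F] ExtQ T RM (i + j)) : Prop :=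
  ∀ W : (n : ℕ) → Submodule F (ExtQ T RM n),
    W 0 = ⊤ →
    (∀ (i j : ℕ) (x : ExtQ T RT i) (y : ExtQ T RM j),
      y ∈ W j → μ i j x y ∈ W (i + j)) →
    ∀ n, W n = ⊤

end Ext

/-- `JM` is (a graded module isomorphic to) the submodule `J·M` of `M`. -/
def IsJM (M JM : 𝒜.GMod) : Prop :=
  ∃ e : JM.M ≃ₗ[𝒜.A] ↥(𝒜.jideal • (⊤ : Submodule 𝒜.A M.M)),
    ∀ (j : ℤ) (x : JM.M), x ∈ JM.grading j ↔ ((e x : M.M) ∈ M.grading j)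

/-- `Q` is (a graded module isomorphic to) the quotient `M/JM`. -/
def IsQuotJM (M Q : 𝒜.GMod) : Prop :=
  ∃ e : Q.M ≃ₗ[𝒜.A] (M.M ⧸ (𝒜.jideal • (⊤ : Submodule 𝒜.A M.M))),
    ∀ j : ℤ, Q.grading j = Submodule.map
      ((e.symm.toLinearMap ∘ₗ (𝒜.jideal • (⊤ : Submodule 𝒜.A M.M)).mkQ).restrictScalars F)
      (M.grading j)

/-- `W` is (isomorphic to) the `n`-th syzygy `Ω^n(M)` of `M` in the minimal graded
projective resolution `R`. -/
def IsSyzygy {M : 𝒜.GMod} (R : MinRes M) : ℕ → 𝒜.GMod → Prop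
  | 0, W => ∃ e : W.M ≃ₗ[𝒜.A] M.M,
      ∀ (j : ℤ) (x : W.M), x ∈ W.grading j ↔ e x ∈ M.grading j
  | 1, W => ∃ e : W.M ≃ₗ[𝒜.A] ↥(LinearMap.ker R.aug.lin),
      ∀ (j : ℤ) (x : W.M), x ∈ W.grading j ↔ ((e x : (R.P 0).M) ∈ (R.P 0).grading j)
  | (n + 2), W => ∃ e : W.M ≃ₗ[𝒜.A] ↥(LinearMap.ker (R.d n).lin),
      ∀ (j : ℤ) (x : W.M), x ∈ W.grading j ↔ ((e x : (R.P (n + 1)).M) ∈ (R.P (n + 1)).grading j)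

end GradedAlg

namespace GradedAlg

section GradedTools

variable {F : Type} [Field F] {𝒜 : GradedAlg F}

theorem indep_of_proj {M : Type} [AddCommGroup M] [Module F M] (G : ℤ → Submodule F M)
    (p : ℤ → M →ₗ[F] M) (h1 : ∀ j, ∀ x ∈ G j, p j x = x)
    (h2 : ∀ i j, i ≠ j → ∀ x ∈ G i, p j x = 0) : iSupIndep G := by
  intro j
  rw [Submodule.disjoint_def]
  intro x hx hx'
  rw [← h1 j x hx]
  have : (⨆ i, ⨆ (_ : i ≠ j), G i) ≤ LinearMap.ker (p j) := by
    refine iSup_le fun i => iSup_le fun hij => ?_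
    intro y hy
    exact h2 i j hij y hy
  exact this hx'

namespace GMod

variable (X : 𝒜.GMod)

theorem isInternal : DirectSum.IsInternal X.grading :=
  DirectSum.isInternal_submodule_of_iSupIndep_of_iSup_eq_top X.indep X.sup_eq_top

instance decomp : DirectSum.Decomposition X.grading := X.isInternal.chooseDecomposition

/-- homogeneous component -/
def comp (j : ℤ) : X.M →ₗ[F] X.M :=
  (X.grading j).subtype ∘ₗ DirectSum.component F ℤ (fun i => X.grading i) j ∘ₗ
    (DirectSum.decomposeLinearEquiv X.grading).toLinearMap

theorem comp_apply (j : ℤ) (x : X.M) :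
    X.comp j x = (DirectSum.decompose X.grading x j : X.M) := rfl

theorem comp_mem (j : ℤ) (x : X.M) : X.comp j x ∈ X.grading j := by
  rw [comp_apply]; exact Subtype.property _

theorem comp_of_mem {j : ℤ} {x : X.M} (h : x ∈ X.grading j) : X.comp j x = x := by
  rw [comp_apply, DirectSum.decompose_of_mem_same _ h]

theorem comp_of_ne {i j : ℤ} {x : X.M} (h : x ∈ X.grading i) (hij : i ≠ j) :
    X.comp j x = 0 := by
  rw [comp_apply, DirectSum.decompose_of_mem_ne _ h hij]

theorem exists_sum (x : X.M) : ∃ s : Finset ℤ, ∑ j ∈ s, X.comp j x = x := by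
  classical
  exact ⟨_, DirectSum.sum_support_decompose X.grading x⟩

theorem hinduction {p : X.M → Prop} (x : X.M) (h : ∀ j, ∀ x ∈ X.grading j, p x)
    (h0 : p 0) (ha : ∀ x y, p x → p y → p (x + y)) : p x := by
  have hx : x ∈ ⨆ j, X.grading j := by rw [X.sup_eq_top]; trivial
  exact Submodule.iSup_induction X.grading (motive := p) hx h h0 ha

theorem eq_zero_of_comp {x : X.M} (h : ∀ j, X.comp j x = 0) : x = 0 := by
  obtain ⟨s, hs⟩ := X.exists_sum x
  rw [← hs]; exact Finset.sum_eq_zero fun j _ => h j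

theorem comp_comp_same (j : ℤ) (x : X.M) : X.comp j (X.comp j x) = X.comp j x :=
  X.comp_of_mem (X.comp_mem j x)

theorem comp_smul {i : ℕ} {a : 𝒜.A} (ha : a ∈ 𝒜.grading i) (j : ℤ) (x : X.M) :
    X.comp (i + j) (a • x) = a • X.comp j x := by
  induction x using X.hinduction with
  | h0 => simp
  | ha x y hx hy => simp [hx, hy]
  | h j' x hx =>
    by_cases h : j' = j
    · subst h
      rw [X.comp_of_mem hx, X.comp_of_mem (X.smul_mem ha hx)]
    · rw [X.comp_of_ne hx h, X.comp_of_ne (X.smul_mem ha hx) (by omega), smul_zero]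

theorem comp_smul' {i : ℕ} {a : 𝒜.A} (ha : a ∈ 𝒜.grading i) (j : ℤ) (x : X.M) :
    X.comp j (a • x) = a • X.comp (j - i) x := by
  rw [← X.comp_smul ha]; congr 2; ring

theorem ainduction {p : 𝒜.A → Prop} (a : 𝒜.A) (h : ∀ j, ∀ x ∈ 𝒜.grading j, p x)
    (h0 : p 0) (ha : ∀ x y, p x → p y → p (x + y)) : p a := by
  refine DirectSum.Decomposition.inductionOn 𝒜.grading h0 ?_ ha a
  intro i m; exact h i m m.2

/-- elements living in degrees `≥ t` -/
def above (t : ℤ) : Submodule 𝒜.A X.M where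
  carrier := {x | ∀ j < t, X.comp j x = 0}
  add_mem' := fun {a b} ha hb j hj => by rw [map_add, ha j hj, hb j hj, add_zero]
  zero_mem' := fun j _ => map_zero _
  smul_mem' := fun a x hx j hj => by
    induction a using ainduction with
    | h0 => simp
    | ha a b iha ihb => simp [add_smul, iha, ihb]
    | h i a ha =>
      rw [X.comp_smul' ha, hx _ (by omega), smul_zero]

theorem mem_above {t : ℤ} {x : X.M} : x ∈ X.above t ↔ ∀ j < t, X.comp j x = 0 := Iff.rfl

theorem mem_above_of_mem {t j : ℤ} {x : X.M} (hx : x ∈ X.grading j) (h : t ≤ j) :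
    x ∈ X.above t := fun i hi => X.comp_of_ne hx (by omega)

/-- `a • x` for `x` in lowest degree. -/
theorem comp_smul_above {t : ℤ} {x : X.M} (hx : x ∈ X.above t) (a : 𝒜.A) :
    X.comp t (a • x) = GradedRing.proj 𝒜.grading 0 a • X.comp t x := by
  induction a using ainduction with
  | h0 => simp
  | ha a b iha ihb => simp [add_smul, iha, ihb, map_add]
  | h i a ha =>
    rw [X.comp_smul' ha, GradedRing.proj_apply]
    by_cases h : i = 0
    · subst h
      rw [DirectSum.decompose_of_mem_same _ ha]; simp
    · rw [DirectSum.decompose_of_mem_ne _ ha h, zero_smul, hx _ (by omega), smul_zero]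

theorem GenInDeg.above_eq {X : 𝒜.GMod} {s : ℤ} (h : X.GenInDeg s) : X.above s = ⊤ := by
  rw [eq_top_iff, ← h, Submodule.span_le]
  intro x hx
  exact X.mem_above_of_mem hx le_rfl

theorem GenInDeg.mem_above {X : 𝒜.GMod} {s : ℤ} (h : X.GenInDeg s) (x : X.M) :
    x ∈ X.above s := by rw [h.above_eq]; trivial

/-- homogeneous sub-module -/
def sub (N : Submodule 𝒜.A X.M) (hN : ∀ x ∈ N, ∀ j, X.comp j x ∈ N) : 𝒜.GMod where
  M := N
  grading j := (X.grading j).comap (N.subtype.restrictScalars F)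
  sup_eq_top := by
    rw [eq_top_iff]
    rintro ⟨x, hx⟩ -
    obtain ⟨s, hs⟩ := X.exists_sum x
    have : (⟨x, hx⟩ : N) = ∑ j ∈ s, ⟨X.comp j x, hN x hx j⟩ := by
      apply Subtype.ext
      rw [AddSubmonoidClass.coe_finsetSum]
      exact hs.symm
    rw [this]
    refine Submodule.sum_mem _ fun j _ => ?_
    exact Submodule.mem_iSup_of_mem j (X.comp_mem j x)
  indep := by
    refine indep_of_proj _ (fun j => ((X.comp j).restrict (p := N.restrictScalars F)
      (q := N.restrictScalars F) (fun x hx => hN x hx j))) ?_ ?_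
    · rintro j ⟨x, hx⟩ h
      exact Subtype.ext (X.comp_of_mem h)
    · rintro i j hij ⟨x, hx⟩ h
      exact Subtype.ext (X.comp_of_ne h hij)
  smul_mem := fun {i j a m} ha hm => X.smul_mem ha hm

theorem mem_sub_grading {N : Submodule 𝒜.A X.M} {hN} {j : ℤ} {x : N} :
    x ∈ (X.sub N hN).grading j ↔ (x : X.M) ∈ X.grading j := Iff.rfl

/-- inclusion of a homogeneous submodule -/
def subι (N : Submodule 𝒜.A X.M) (hN : ∀ x ∈ N, ∀ j, X.comp j x ∈ N) : GHom (X.sub N hN) X where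
  lin := N.subtype
  grad := fun _ _ hx => hx

theorem sub_comp {N : Submodule 𝒜.A X.M} {hN} (j : ℤ) (x : N) :
    ((X.sub N hN).comp j x : N).1 = X.comp j x.1 := by
  induction x using (X.sub N hN).hinduction with
  | h0 => 
    rw [map_zero]
    exact (map_zero (X.comp j)).symm
  | ha x y hx hy =>
    rw [map_add]
    refine (congrArg₂ (· + ·) hx hy).trans ?_
    exact (map_add (X.comp j) _ _).symm
  | h i x hx =>
    by_cases h : i = j
    · subst h
      rw [(X.sub N hN).comp_of_mem hx]
      exact (X.comp_of_mem hx).symm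
    · rw [(X.sub N hN).comp_of_ne hx h]
      exact (X.comp_of_ne hx h).symm

/-- shift -/
def shift (t : ℤ) : 𝒜.GMod where
  M := X.M
  grading j := X.grading (j - t)
  sup_eq_top := by
    rw [eq_top_iff, ← X.sup_eq_top]
    refine iSup_le fun j => ?_
    refine le_trans (le_of_eq ?_) (le_iSup _ (j + t))
    congr 1; ring
  indep := by
    refine indep_of_proj _ (fun j => X.comp (j - t)) ?_ ?_
    · intro j x hx
      exact X.comp_of_mem hx
    · intro i j hij x hx
      exact X.comp_of_ne hx (by omega)
  smul_mem := fun {i j a m} ha hm => by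
    have := X.smul_mem ha hm
    convert this using 1; rw [add_sub_assoc]

/-- power -/
def pow (m : ℕ) : 𝒜.GMod where
  M := Fin m → X.M
  grading j := Submodule.pi Set.univ (fun _ => X.grading j)
  sup_eq_top := by
    rw [eq_top_iff]
    intro x _
    have hx : x = ∑ i, Pi.single i (x i) := (Finset.univ_sum_single x).symm
    rw [hx]
    refine Submodule.sum_mem _ fun i _ => ?_
    obtain ⟨s, hs⟩ := X.exists_sum (x i)
    rw [← hs]
    have : (Pi.single i (∑ j ∈ s, X.comp j (x i)) : Fin m → X.M) =
      ∑ j ∈ s, Pi.single i (X.comp j (x i)) :=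
      map_sum (LinearMap.single F (fun _ : Fin m => X.M) i) _ _
    rw [this]
    refine Submodule.sum_mem _ fun j _ => Submodule.mem_iSup_of_mem j ?_
    intro i' _
    by_cases h : i' = i
    · subst h; simpa using X.comp_mem j (x i')
    · simp [h]
  indep := by
    refine indep_of_proj _ (fun j => LinearMap.pi fun i => X.comp j ∘ₗ LinearMap.proj i) ?_ ?_
    · intro j x hx
      ext i
      exact X.comp_of_mem (hx i trivial)
    · intro i j hij x hx
      ext i
      exact X.comp_of_ne (hx i trivial) hij
  smul_mem := fun {i j a m} ha hm => fun i' _ => X.smul_mem ha (hm i' trivial)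

end GMod

namespace GHom

variable {X Y Z : 𝒜.GMod}

theorem map_comp (f : GHom X Y) (j : ℤ) (x : X.M) : f.lin (X.comp j x) = Y.comp j (f.lin x) := by
  induction x using X.hinduction with
  | h0 => simp
  | ha x y hx hy => simp [hx, hy]
  | h i x hx =>
    by_cases h : i = j
    · subst h
      rw [X.comp_of_mem hx, Y.comp_of_mem (f.grad _ _ hx)]
    · rw [X.comp_of_ne hx h, Y.comp_of_ne (f.grad _ _ hx) h, map_zero]

/-- composition -/
def trans (f : GHom X Y) (g : GHom Y Z) : GHom X Z where
  lin := g.lin ∘ₗ f.lin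
  grad := fun j x hx => g.grad j _ (f.grad j x hx)

/-- kernel -/
def ker (f : GHom X Y) : 𝒜.GMod := X.sub (LinearMap.ker f.lin) (fun x hx j => by
  rw [LinearMap.mem_ker] at hx ⊢
  rw [f.map_comp, hx, map_zero])

/-- kernel inclusion -/
def kerι (f : GHom X Y) : GHom f.ker X := X.subι _ _

theorem surj_deg (f : GHom X Y) (hf : Function.Surjective f.lin) {j : ℤ} {y : Y.M}
    (hy : y ∈ Y.grading j) : ∃ x ∈ X.grading j, f.lin x = y := by
  obtain ⟨x, rfl⟩ := hf y
  exact ⟨X.comp j x, X.comp_mem j x, by rw [f.map_comp, Y.comp_of_mem hy]⟩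

theorem eq_of_gen {s : ℤ} (h : X.GenInDeg s) (f g : GHom X Y)
    (hfg : ∀ x ∈ X.grading s, f.lin x = g.lin x) : f.lin = g.lin := by
  have : (⊤ : Submodule 𝒜.A X.M) ≤ LinearMap.eqLocus f.lin g.lin := by
    rw [← h, Submodule.span_le]
    intro x hx; exact hfg x hx
  ext x
  exact this (x := x) trivial

theorem gen_of_surj {s : ℤ} (h : X.GenInDeg s) (f : GHom X Y)
    (hf : Function.Surjective f.lin) : Y.GenInDeg s := by
  unfold GMod.GenInDeg
  rw [eq_top_iff, ← LinearMap.range_eq_top.mpr hf, LinearMap.range_eq_map, ← h,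
    Submodule.map_span, Submodule.span_le]
  rintro _ ⟨x, hx, rfl⟩
  exact Submodule.subset_span (f.grad _ _ hx)

/-- the degree zero part of a linear map -/
theorem gradify (g : X.M →ₗ[𝒜.A] Y.M) :
    ∃ f : GHom X Y, ∀ j, ∀ x ∈ X.grading j, f.lin x = Y.comp j (g x) := by
  let f0 : X.M →ₗ[F] Y.M := (DirectSum.toModule F ℤ Y.M (fun j => Y.comp j ∘ₗ
    g.restrictScalars F ∘ₗ (X.grading j).subtype)) ∘ₗ
      (DirectSum.decomposeLinearEquiv X.grading).toLinearMap
  have hf0 : ∀ j, ∀ x ∈ X.grading j, f0 x = Y.comp j (g x) := by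
    intro j x hx
    simp only [f0, LinearMap.comp_apply, LinearEquiv.coe_coe,
      DirectSum.decomposeLinearEquiv_apply]
    lift x to X.grading j using hx
    rw [DirectSum.decompose_coe]
    erw [DirectSum.toModule_lof]
    rfl
  refine ⟨⟨{ f0 with
    map_smul' := ?_ }, ?_⟩, hf0⟩
  · intro a x
    change f0 (a • x) = a • f0 x
    induction x using X.hinduction with
    | h0 => simp
    | ha x y hx hy => simp [smul_add, hx, hy]
    | h j x hx =>
      induction a using GMod.ainduction with
      | h0 => simp
      | ha a b iha ihb => simp [add_smul, iha, ihb]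
      | h i a ha =>
        rw [hf0 _ _ hx, hf0 _ _ (X.smul_mem ha hx), map_smul, Y.comp_smul ha]
  · intro j x hx
    change f0 x ∈ _
    rw [hf0 j x hx]; exact Y.comp_mem _ _

end GHom

end GradedTools

end GradedAlg

namespace GradedAlg

section LinearModules

variable {F : Type} [Field F] {𝒜 : GradedAlg F}

/-- module annihilated by the graded radical -/
def Kill (𝒜 : GradedAlg F) (X : Type) [AddCommGroup X] [Module 𝒜.A X] : Prop :=
  ∀ a ∈ 𝒜.jideal, ∀ x : X, a • x = 0

theorem mem_jideal {a : 𝒜.A} : a ∈ 𝒜.jideal ↔ GradedRing.proj 𝒜.grading 0 a = 0 :=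
  HomogeneousIdeal.mem_irrelevant_iff _ _

theorem mem_jideal_of_mem {i : ℕ} (hi : 0 < i) {a : 𝒜.A} (ha : a ∈ 𝒜.grading i) :
    a ∈ 𝒜.jideal := HomogeneousIdeal.mem_irrelevant_of_mem _ hi ha

theorem sub_proj_mem (a : 𝒜.A) : a - GradedRing.proj 𝒜.grading 0 a ∈ 𝒜.jideal := by
  rw [mem_jideal, map_sub, sub_eq_zero]
  simp [GradedRing.proj_apply]

theorem Kill.smul_eq {X : Type} [AddCommGroup X] [Module 𝒜.A X] (h : Kill 𝒜 X) (a : 𝒜.A)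
    (x : X) : a • x = GradedRing.proj 𝒜.grading 0 a • x := by
  rw [← sub_eq_zero, ← sub_smul]
  exact h _ (sub_proj_mem a) x

theorem jideal_eq_ker : 𝒜.jideal = RingHom.ker (GradedRing.projZeroRingHom' 𝒜.grading) := by
  ext a
  rw [mem_jideal, RingHom.mem_ker, ← Subtype.coe_inj]
  rfl

instance jideal_twoSided : (𝒜.jideal).IsTwoSided := by
  rw [jideal_eq_ker]; infer_instance

theorem semisimple_quot (hA : 𝒜.Standing) : IsSemisimpleRing (𝒜.A ⧸ 𝒜.jideal) := by
  have := hA.semisimple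
  let f : (𝒜.A ⧸ 𝒜.jideal) →+* 𝒜.grading 0 :=
    Ideal.Quotient.lift _ (GradedRing.projZeroRingHom' 𝒜.grading) (fun a ha => by
      rwa [jideal_eq_ker] at ha)
  have hf : Function.Bijective f := by
    constructor
    · rw [injective_iff_map_eq_zero]
      intro x
      obtain ⟨a, rfl⟩ := Ideal.Quotient.mk_surjective x
      intro h
      rw [Ideal.Quotient.eq_zero_iff_mem, jideal_eq_ker]
      exact h
    · intro y
      exact ⟨Ideal.Quotient.mk _ y.1, GradedRing.projZeroRingHom'_apply_coe _ y⟩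
  exact (RingEquiv.ofBijective f hf).symm.isSemisimpleRing

theorem Kill.semisimple (hA : 𝒜.Standing) {X : Type} [AddCommGroup X] [Module 𝒜.A X]
    (h : Kill 𝒜 X) : IsSemisimpleModule 𝒜.A X := by
  have := semisimple_quot hA
  have ht : Module.IsTorsionBySet 𝒜.A X (𝒜.jideal : Set 𝒜.A) := fun x a => h a.1 a.2 x
  let _ := ht.module
  exact (ht.isSemisimpleModule_iff).1 inferInstance

theorem Kill.quot_top {X : 𝒜.GMod} {s : ℤ} (h : X.GenInDeg s) :
    Kill 𝒜 (X.M ⧸ X.above (s + 1)) := by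
  intro a ha x
  obtain ⟨x, rfl⟩ := Submodule.Quotient.mk_surjective _ x
  rw [← Submodule.Quotient.mk_smul, Submodule.Quotient.mk_eq_zero]
  intro j hj
  by_cases hjs : j = s
  · subst hjs
    rw [X.comp_smul_above (h.mem_above x), mem_jideal.1 ha, zero_smul]
  · exact (X.above s).smul_mem a (h.mem_above x) j (by omega)

theorem kill_of_equiv {X Y : Type} [AddCommGroup X] [Module 𝒜.A X] [AddCommGroup Y]
    [Module 𝒜.A Y] (h : Kill 𝒜 X) (e : Y ≃ₗ[𝒜.A] X) : Kill 𝒜 Y := by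
  intro a ha y
  apply e.injective
  rw [map_smul, h a ha, map_zero]

theorem kill_quot : Kill 𝒜 (𝒜.A ⧸ 𝒜.jideal) := by
  intro a ha x
  obtain ⟨x, rfl⟩ := Submodule.Quotient.mk_surjective _ x
  rw [← Submodule.Quotient.mk_smul, Submodule.Quotient.mk_eq_zero]
  exact Ideal.mul_mem_right _ _ ha

theorem IsTrivialGMod.kill {T : 𝒜.GMod} (h : IsTrivialGMod T) : Kill 𝒜 T.M :=
  kill_of_equiv kill_quot h.2.some

/-- linear maps from a module generated in degree `s` to a killed module -/
theorem kill_map_above {X : 𝒜.GMod} {s : ℤ} (h : X.GenInDeg s) {Y : Type} [AddCommGroup Y]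
    [Module 𝒜.A Y] (hY : Kill 𝒜 Y) (f : X.M →ₗ[𝒜.A] Y) (x : X.M) : f x = f (X.comp s x) := by
  have hx : x ∈ Submodule.span 𝒜.A (X.grading s : Set X.M) := by rw [h]; trivial
  induction hx using Submodule.span_induction with
  | mem x hx => rw [X.comp_of_mem hx]
  | zero => simp
  | add x y _ _ hx hy => rw [map_add, map_add, map_add, hx, hy]
  | smul a x _ hx =>
    rw [X.comp_smul_above (h.mem_above x), map_smul, map_smul, hx, hY.smul_eq]

theorem kill_map_above_zero {X : 𝒜.GMod} {s : ℤ} (h : X.GenInDeg s) {Y : Type} [AddCommGroup Y]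
    [Module 𝒜.A Y] (hY : Kill 𝒜 Y) (f : X.M →ₗ[𝒜.A] Y) {x : X.M} (hx : x ∈ X.above (s + 1)) :
    f x = 0 := by
  rw [kill_map_above h hY f x, hx s (by omega), map_zero]

/-- finitely generated projective, generated in degree `s` -/
structure GP (s : ℤ) (P : 𝒜.GMod) : Prop where
  fin : Module.Finite 𝒜.A P.M
  proj : Module.Projective 𝒜.A P.M
  gen : P.GenInDeg s

/-- `P → X` is a cover -/
structure Cover (s : ℤ) {P X : 𝒜.GMod} (π : GHom P X) : Prop where
  gp : GP s P
  surj : Function.Surjective π.lin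
  inj : ∀ x ∈ P.grading s, π.lin x = 0 → x = 0

theorem GP.lift {s : ℤ} {P X Y : 𝒜.GMod} (hP : GP s P) (f : GHom P Y) (π : GHom X Y)
    (hπ : Function.Surjective π.lin) : ∃ g : GHom P X, π.lin ∘ₗ g.lin = f.lin := by
  have := hP.proj
  obtain ⟨g0, hg0⟩ := Module.projective_lifting_property π.lin f.lin hπ
  obtain ⟨g, hg⟩ := GHom.gradify (X := P) (Y := X) g0
  refine ⟨g, ?_⟩
  refine GHom.eq_of_gen hP.gen (g.trans π) f ?_
  intro x hx
  change π.lin (g.lin x) = f.lin x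
  rw [hg s x hx, π.map_comp, ← LinearMap.comp_apply, hg0, Y.comp_of_mem (f.grad _ _ hx)]

/-- extension lemma -/
theorem GP.extend {s : ℤ} {P Y : 𝒜.GMod} (hP : GP s P)
    (ρ : P.M →ₗ[𝒜.A] Y.M ⧸ Y.above (s + 1)) :
    ∃ g : GHom P Y, ∀ x ∈ P.grading s, (Y.above (s+1)).mkQ (g.lin x) =
      (Y.above (s+1)).mkQ (Y.comp s (g.lin x)) ∧
      ∀ y ∈ Y.grading s, ρ x = (Y.above (s+1)).mkQ y → g.lin x = y := by
  have := hP.proj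
  obtain ⟨g0, hg0⟩ := Module.projective_lifting_property (Y.above (s+1)).mkQ ρ
    (Submodule.mkQ_surjective _)
  obtain ⟨g, hg⟩ := GHom.gradify (X := P) (Y := Y) g0
  refine ⟨g, fun x hx => ⟨?_, ?_⟩⟩
  · rw [Y.comp_of_mem (g.grad _ _ hx)]
  · intro y hy h
    rw [hg s x hx]
    have : (Y.above (s+1)).mkQ (g0 x) = (Y.above (s+1)).mkQ y := by
      rw [← h, ← hg0]; rfl
    rw [← sub_eq_zero, ← map_sub, ← LinearMap.mem_ker, Submodule.ker_mkQ] at this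
    have h2 := this s (by omega)
    rwa [map_sub, sub_eq_zero, Y.comp_of_mem hy] at h2

theorem mkQ_comp {X : 𝒜.GMod} {s : ℤ} (h : X.GenInDeg s) (x : X.M) :
    (X.above (s+1)).mkQ x = (X.above (s+1)).mkQ (X.comp s x) :=
  kill_map_above h (Kill.quot_top h) _ x

theorem mkQ_top_eq_zero {X : 𝒜.GMod} {s : ℤ} {x : X.M} (hx : x ∈ X.grading s)
    (h0 : (X.above (s+1)).mkQ x = 0) : x = 0 := by
  rw [← LinearMap.mem_ker, Submodule.ker_mkQ] at h0
  have := h0 s (by omega)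
  rwa [X.comp_of_mem hx] at this

theorem GHom.map_above {X Y : 𝒜.GMod} (f : GHom X Y) {t : ℤ} {x : X.M} (hx : x ∈ X.above t) :
    f.lin x ∈ Y.above t := by
  intro j hj
  rw [← f.map_comp, hx j hj, map_zero]

/-- idempotent splitting a surjection from a projective -/
theorem exists_idem (hA : 𝒜.Standing) {s : ℤ} {P X : 𝒜.GMod} (hP : GP s P) (π : GHom P X)
    (hπ : Function.Surjective π.lin) :
    ∃ ε : GHom P P, (∀ x, ε.lin (ε.lin x) = ε.lin x) ∧ (∀ x, π.lin (ε.lin x) = π.lin x) ∧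
      ∀ x ∈ P.grading s, π.lin x = 0 → ε.lin x = 0 := by
  have hX := GHom.gen_of_surj hP.gen π hπ
  let πt : (P.M ⧸ P.above (s+1)) →ₗ[𝒜.A] (X.M ⧸ X.above (s+1)) :=
    Submodule.mapQ _ _ π.lin (fun x hx => π.map_above hx)
  have hπt : Function.Surjective πt := by
    intro y
    obtain ⟨y, rfl⟩ := Submodule.Quotient.mk_surjective _ y
    obtain ⟨x, rfl⟩ := hπ y
    exact ⟨Submodule.Quotient.mk x, rfl⟩
  have := (Kill.quot_top hP.gen).semisimple hA
  obtain ⟨σ, hσ⟩ := IsSemisimpleModule.lifting_property πt hπt LinearMap.id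
  have hσ' : ∀ y, πt (σ y) = y := fun y => LinearMap.congr_fun hσ y
  let ρ : P.M →ₗ[𝒜.A] P.M ⧸ P.above (s+1) := σ ∘ₗ (X.above (s+1)).mkQ ∘ₗ π.lin
  obtain ⟨ε, hε⟩ := hP.extend ρ
  have key : ∀ x ∈ P.grading s, (P.above (s+1)).mkQ (ε.lin x) = ρ x := by
    intro x hx
    obtain ⟨y, hy⟩ := Submodule.mkQ_surjective _ (ρ x)
    rw [mkQ_comp hP.gen] at hy
    rw [(hε x hx).2 _ (P.comp_mem s y) hy.symm, hy]
  have h1 : ∀ x ∈ P.grading s, π.lin (ε.lin x) = π.lin x := by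
    intro x hx
    rw [← sub_eq_zero]
    refine mkQ_top_eq_zero (s := s) (X := X) ((X.grading s).sub_mem
      (π.grad _ _ (ε.grad _ _ hx)) (π.grad _ _ hx)) ?_
    rw [map_sub, sub_eq_zero]
    have : πt ((P.above (s+1)).mkQ (ε.lin x)) = πt (ρ x) := by rw [key x hx]
    exact this.trans (hσ' _)
  have h2 : ∀ x ∈ P.grading s, π.lin x = 0 → ε.lin x = 0 := by
    intro x hx h0
    refine mkQ_top_eq_zero (s := s) (X := P) (ε.grad _ _ hx) ?_
    rw [key x hx]
    simp [ρ, h0]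
  have h1' := GHom.eq_of_gen hP.gen (ε.trans π) π h1
  refine ⟨ε, ?_, fun x => LinearMap.congr_fun h1' x, h2⟩
  have h3 := GHom.eq_of_gen hP.gen (ε.trans ε) ε (fun x hx => by
    change ε.lin (ε.lin x) = ε.lin x
    rw [← sub_eq_zero, ← map_sub]
    refine h2 _ ((P.grading s).sub_mem (ε.grad _ _ hx) hx) ?_
    rw [map_sub, h1 x hx, sub_self])
  exact fun x => LinearMap.congr_fun h3 x

/-- range of an endomorphism -/
def rangeG {X Y : 𝒜.GMod} (f : GHom X Y) : 𝒜.GMod :=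
  Y.sub (LinearMap.range f.lin) (by
    rintro _ ⟨x, rfl⟩ j
    exact ⟨X.comp j x, f.map_comp j x⟩)

/-- corestriction -/
def toRangeG {X Y : 𝒜.GMod} (f : GHom X Y) : GHom X (rangeG f) where
  lin := f.lin.rangeRestrict
  grad := fun j x hx => f.grad j x hx

theorem GP.of_surj_split {s : ℤ} {P Q : 𝒜.GMod} (hP : GP s P) (f : GHom P Q) (g : GHom Q P)
    (h : ∀ x, f.lin (g.lin x) = x) : GP s Q := by
  have := hP.proj
  have := hP.fin
  have hs : Function.Surjective f.lin := fun x => ⟨_, h x⟩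
  refine ⟨Module.Finite.of_surjective f.lin hs, ?_, GHom.gen_of_surj hP.gen f hs⟩
  exact Module.Projective.of_split g.lin f.lin (LinearMap.ext h)

/-- the `E'` lemma -/
theorem exists_cover (hA : 𝒜.Standing) {s : ℤ} {P X : 𝒜.GMod} (hP : GP s P) (π : GHom P X)
    (hπ : Function.Surjective π.lin) : ∃ (Q : 𝒜.GMod) (ρ : GHom Q X), Cover s ρ := by
  obtain ⟨ε, h1, h2, h3⟩ := exists_idem hA hP π hπ
  refine ⟨rangeG ε, (P.subι _ _).trans π, ?_, ?_, ?_⟩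
  · refine hP.of_surj_split (toRangeG ε) (P.subι _ _) ?_
    rintro ⟨_, x, rfl⟩
    exact Subtype.ext (h1 x)
  · intro y
    obtain ⟨x, rfl⟩ := hπ y
    exact ⟨⟨ε.lin x, x, rfl⟩, h2 x⟩
  · rintro ⟨_, x, rfl⟩ hx h0
    refine Subtype.ext ?_
    change ε.lin x = 0
    rw [← h1]
    exact h3 _ hx h0

/-- retracts -/
def IsRet (X L : 𝒜.GMod) : Prop :=
  ∃ (m : ℕ) (u : Fin m → GHom X L) (v : Fin m → GHom L X),
    ∀ x, ∑ a, (v a).lin ((u a).lin x) = x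

theorem IsRet.refl (X : 𝒜.GMod) : IsRet X X :=
  ⟨1, fun _ => ⟨LinearMap.id, fun _ _ h => h⟩, fun _ => ⟨LinearMap.id, fun _ _ h => h⟩,
    fun x => by simp⟩

/-- finite sums of graded morphisms -/
def sumG {ι : Type} [Fintype ι] {X Y : 𝒜.GMod} (f : ι → GHom X Y) : GHom X Y where
  lin := ∑ a, (f a).lin
  grad := fun j x hx => by
    rw [LinearMap.sum_apply]
    exact Submodule.sum_mem _ fun a _ => (f a).grad j x hx

/-- identity -/
def idG (X : 𝒜.GMod) : GHom X X := ⟨LinearMap.id, fun _ _ h => h⟩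

/-- induced map on kernels -/
def kerMap {P X Q Y : 𝒜.GMod} (π : GHom P X) (ρ : GHom Q Y) (U : GHom P Q) (u : GHom X Y)
    (h : ρ.lin ∘ₗ U.lin = u.lin ∘ₗ π.lin) : GHom π.ker ρ.ker where
  lin := U.lin.restrict (p := LinearMap.ker π.lin) (q := LinearMap.ker ρ.lin) (fun x hx => by
    rw [LinearMap.mem_ker] at hx ⊢
    rw [← LinearMap.comp_apply, h, LinearMap.comp_apply, hx, map_zero])
  grad := fun j x hx => U.grad j _ hx

/-- kernels of covers of retracts are retracts -/
theorem IsRet.ker {s : ℤ} {X L P Q : 𝒜.GMod} (h : IsRet X L) {π : GHom P X} (hπ : Cover s π)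
    {ρ : GHom Q L} (hQ : GP s Q) (hρ : Function.Surjective ρ.lin) : IsRet π.ker ρ.ker := by
  obtain ⟨m, u, v, huv⟩ := h
  have hU := fun a => hπ.gp.lift (π.trans (u a)) ρ hρ
  have hV := fun a => hQ.lift (ρ.trans (v a)) π hπ.surj
  choose U hU using hU
  choose V hV using hV
  have key : (sumG fun a => (U a).trans (V a)).lin = (idG P).lin := by
    refine GHom.eq_of_gen hπ.gp.gen _ _ fun x hx => ?_
    rw [← sub_eq_zero]
    refine hπ.inj _ ((P.grading s).sub_mem ((sumG fun a => (U a).trans (V a)).grad _ _ hx) hx) ?_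
    rw [map_sub, sub_eq_zero]
    change π.lin ((∑ a, (V a).lin ∘ₗ (U a).lin) x) = π.lin x
    rw [LinearMap.sum_apply, map_sum]
    conv_rhs => rw [← huv (π.lin x)]
    refine Finset.sum_congr rfl fun a _ => ?_
    have h1 := LinearMap.congr_fun (hV a) ((U a).lin x)
    have h2 := LinearMap.congr_fun (hU a) x
    change π.lin ((V a).lin ((U a).lin x)) = (v a).lin (ρ.lin ((U a).lin x)) at h1
    change ρ.lin ((U a).lin x) = (u a).lin (π.lin x) at h2
    change π.lin ((V a).lin ((U a).lin x)) = _
    rw [h1, h2]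
  refine ⟨m, fun a => kerMap π ρ (U a) (u a) (hU a), fun a => kerMap ρ π (V a) (v a) (hV a), ?_⟩
  intro x
  refine Subtype.ext ?_
  have := LinearMap.congr_fun key x.1
  change (∑ a, (V a).lin ∘ₗ (U a).lin) x.1 = x.1 at this
  rw [LinearMap.sum_apply] at this
  conv_rhs => rw [← this]
  refine (AddSubmonoidClass.coe_finsetSum _ _).trans ?_
  rfl

theorem GP.pow {s : ℤ} {P : 𝒜.GMod} (h : GP s P) (m : ℕ) : GP s (P.pow m) := by
  have := h.fin
  have := h.proj
  refine ⟨inferInstanceAs (Module.Finite 𝒜.A (Fin m → P.M)),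
    Module.Projective.of_equiv (DFinsupp.linearEquivFunOnFintype (R := 𝒜.A)
      (M := fun _ : Fin m => P.M)), ?_⟩
  unfold GMod.GenInDeg
  rw [eq_top_iff]
  intro x _
  have hx : x = ∑ i, (LinearMap.single 𝒜.A (fun _ : Fin m => P.M) i) (x i) :=
    (Finset.univ_sum_single (x : Fin m → P.M)).symm
  rw [hx]
  refine Submodule.sum_mem _ fun i _ => ?_
  have : (⊤ : Submodule 𝒜.A P.M) ≤ Submodule.comap
      (LinearMap.single 𝒜.A (fun _ : Fin m => P.M) i : P.M →ₗ[𝒜.A] (P.pow m).M)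
      (Submodule.span 𝒜.A ((P.pow m).grading s : Set (P.pow m).M)) := by
    rw [← h.gen, Submodule.span_le]
    intro y hy
    refine Submodule.subset_span ?_
    intro i' _
    by_cases h : i' = i
    · subst h; simpa using hy
    · simp [h]
  exact this (x := x i) trivial

/-- coordinate sum map out of a power -/
def powMap {P X : 𝒜.GMod} {m : ℕ} (f : Fin m → GHom P X) : GHom (P.pow m) X where
  lin := (∑ a, (f a).lin ∘ₗ LinearMap.proj a : (Fin m → P.M) →ₗ[𝒜.A] X.M)
  grad := fun j x hx => by
    refine (Eq.subst (motive := fun y => y ∈ X.grading j) (LinearMap.sum_apply Finset.univ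
      (fun a => ((f a).lin ∘ₗ LinearMap.proj a : (Fin m → P.M) →ₗ[𝒜.A] X.M)) x).symm ?_)
    exact Submodule.sum_mem _ fun a _ => (f a).grad j _ (hx a trivial)

/-- linear modules -/
def Lin (e : ℕ → ℤ) (X : 𝒜.GMod) : Prop :=
  ∃ C : (ℕ → ℤ) → 𝒜.GMod → Prop, C e X ∧ ∀ e X, C e X →
    ∃ (P : 𝒜.GMod) (π : GHom P X), Function.Surjective π.lin ∧ GP (e 0) P ∧
      C (fun n => e (n + 1)) π.ker

theorem Lin.out {e : ℕ → ℤ} {X : 𝒜.GMod} (h : Lin e X) :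
    ∃ (P : 𝒜.GMod) (π : GHom P X), Function.Surjective π.lin ∧ GP (e 0) P ∧
      Lin (fun n => e (n + 1)) π.ker := by
  obtain ⟨C, h, hC⟩ := h
  obtain ⟨P, π, h1, h2, h3⟩ := hC _ _ h
  exact ⟨P, π, h1, h2, C, h3, hC⟩

theorem Lin.gen {e : ℕ → ℤ} {X : 𝒜.GMod} (h : Lin e X) : X.GenInDeg (e 0) := by
  obtain ⟨P, π, h1, h2, -⟩ := h.out
  exact GHom.gen_of_surj h2.gen π h1

theorem Lin.cover {e : ℕ → ℤ} (he : StrictMono e) {X : 𝒜.GMod} (h : Lin e X) :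
    ∃ (P : 𝒜.GMod) (π : GHom P X), Cover (e 0) π ∧ Lin (fun n => e (n + 1)) π.ker := by
  obtain ⟨P, π, h1, h2, h3⟩ := h.out
  refine ⟨P, π, ⟨h2, h1, ?_⟩, h3⟩
  intro x hx h0
  have := h3.gen.mem_above (X := π.ker) ⟨x, h0⟩ (e 0) (he (by norm_num))
  have h4 := congrArg Subtype.val this
  have h5 : P.comp (e 0) x = 0 := (P.sub_comp (e 0) (⟨x, h0⟩ : LinearMap.ker π.lin)).symm.trans h4
  rwa [P.comp_of_mem hx] at h5

theorem strictMono_shift {e : ℕ → ℤ} (he : StrictMono e) : StrictMono (fun n => e (n + 1)) :=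
  fun _ _ h => he (by omega)

theorem Lin.of_ret (hA : 𝒜.Standing) {e : ℕ → ℤ} (he : StrictMono e) {X L : 𝒜.GMod}
    (h : Lin e L) (hX : IsRet X L) : Lin e X := by
  refine ⟨fun e X => StrictMono e ∧ ∃ L, Lin e L ∧ IsRet X L, ⟨he, L, h, hX⟩, ?_⟩
  clear * - hA
  rintro e X ⟨he, L, h, hX⟩
  obtain ⟨Q, ρ, h1, h2, h3⟩ := h.out
  obtain ⟨m, u, v, huv⟩ := hX
  obtain ⟨P, π, hπ⟩ := exists_cover hA (h2.pow m) (powMap fun a => ρ.trans (v a)) (by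
    intro x
    choose y hy using fun a => h1 ((u a).lin x)
    refine ⟨y, ?_⟩
    refine (LinearMap.sum_apply Finset.univ
      (fun a => (((ρ.trans (v a)).lin ∘ₗ LinearMap.proj a : (Fin m → Q.M) →ₗ[𝒜.A] X.M))) y).trans ?_
    conv_rhs => rw [← huv x]
    refine Finset.sum_congr rfl fun a _ => ?_
    rw [← hy]; rfl)
  exact ⟨P, π, hπ.surj, hπ.gp, strictMono_shift he, _, h3, IsRet.ker ⟨m, u, v, huv⟩ hπ h2 h1⟩

theorem Lin.ker (hA : 𝒜.Standing) {e : ℕ → ℤ} (he : StrictMono e) {X P : 𝒜.GMod}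
    (h : Lin e X) {π : GHom P X} (hπ : Cover (e 0) π) : Lin (fun n => e (n + 1)) π.ker := by
  obtain ⟨Q, ρ, h1, h2, h3⟩ := h.out
  exact h3.of_ret hA (strictMono_shift he) ((IsRet.refl X).ker hπ h2 h1)

/-- isomorphic graded modules -/
theorem Lin.of_iso (hA : 𝒜.Standing) {e : ℕ → ℤ} (he : StrictMono e) {X Y : 𝒜.GMod}
    (h : Lin e X) (f : GHom Y X) (g : GHom X Y) (hfg : ∀ y, g.lin (f.lin y) = y) : Lin e Y :=
  h.of_ret hA he ⟨1, fun _ => f, fun _ => g, fun x => by simp [hfg]⟩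

/-- shifted morphism -/
def GHom.shift {X Y : 𝒜.GMod} (f : GHom X Y) (t : ℤ) : GHom (X.shift t) (Y.shift t) where
  lin := f.lin
  grad := fun j x hx => f.grad _ x hx

theorem GP.shift {s : ℤ} {P : 𝒜.GMod} (h : GP s P) (t : ℤ) : GP (s + t) (P.shift t) := by
  refine ⟨h.fin, h.proj, ?_⟩
  have := h.gen
  unfold GMod.GenInDeg at this ⊢
  have h2 : (P.shift t).grading (s + t) = P.grading s := by
    change P.grading _ = _
    congr 1; ring
  rw [h2]; exact this

theorem Lin.shift {e : ℕ → ℤ} {X : 𝒜.GMod} (h : Lin e X) (t : ℤ) :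
    Lin (fun n => e n + t) (X.shift t) := by
  refine ⟨fun e X => ∃ e' L, Lin e' L ∧ X = L.shift t ∧ e = fun n => e' n + t,
    ⟨e, X, h, rfl, rfl⟩, ?_⟩
  rintro _ _ ⟨e, X, h, rfl, rfl⟩
  obtain ⟨Q, ρ, h1, h2, h3⟩ := h.out
  exact ⟨Q.shift t, ρ.shift t, h1, h2.shift t, _, _, h3, rfl, rfl⟩

end LinearModules

end GradedAlg

namespace GradedAlg

section LinearModules2

variable {F : Type} [Field F] {𝒜 : GradedAlg F}

/-- short exact sequences of graded modules -/
structure Ses {K L C : 𝒜.GMod} (i : GHom K L) (q : GHom L C) : Prop where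
  inj : Function.Injective i.lin
  surj : Function.Surjective q.lin
  exact : ∀ x, q.lin x = 0 ↔ ∃ y, i.lin y = x

theorem Ses.factor {K L C X : 𝒜.GMod} {i : GHom K L} {q : GHom L C} (h : Ses i q)
    (f : GHom X L) (hf : ∀ x, q.lin (f.lin x) = 0) : ∃ g : GHom X K, ∀ x, i.lin (g.lin x) = f.lin x := by
  let f' : X.M →ₗ[𝒜.A] LinearMap.range i.lin := f.lin.codRestrict _ (fun x => by
    obtain ⟨y, hy⟩ := (h.exact _).1 (hf x)
    exact ⟨y, hy⟩)
  let g : X.M →ₗ[𝒜.A] K.M := (LinearEquiv.ofInjective i.lin h.inj).symm.toLinearMap ∘ₗ f'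
  have hg : ∀ x, i.lin (g x) = f.lin x := by
    intro x
    have := (LinearEquiv.ofInjective i.lin h.inj).apply_symm_apply (f' x)
    exact congrArg Subtype.val this
  refine ⟨⟨g, ?_⟩, hg⟩
  intro j x hx
  have : K.comp j (g x) = g x := by
    apply h.inj
    rw [i.map_comp, hg, L.comp_of_mem (f.grad j x hx)]
  rw [← this]; exact K.comp_mem _ _

theorem Ses.covers (hA : 𝒜.Standing) {s : ℤ} {K L C PL : 𝒜.GMod} {i : GHom K L} {q : GHom L C}
    (h : Ses i q) (hK : K.GenInDeg s) {πL : GHom PL L} (hL : Cover s πL) :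
    ∃ (PK PC : 𝒜.GMod) (πK : GHom PK K) (πC : GHom PC C) (φ : GHom PK PL) (ψ : GHom PL PC)
      (h1 : πL.lin ∘ₗ φ.lin = i.lin ∘ₗ πK.lin) (h2 : πC.lin ∘ₗ ψ.lin = q.lin ∘ₗ πL.lin),
      Cover s πK ∧ Cover s πC ∧ Ses (kerMap πK πL φ i h1) (kerMap πL πC ψ q h2) := by
  have hsurj : Function.Surjective (πL.trans q).lin := h.surj.comp hL.surj
  obtain ⟨ε, e1, e2, e3⟩ := exists_idem hA hL.gp (πL.trans q) hsurj
  have e2' : ∀ x, q.lin (πL.lin (ε.lin x)) = q.lin (πL.lin x) := e2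
  have e3' : ∀ x ∈ PL.grading s, q.lin (πL.lin x) = 0 → ε.lin x = 0 := e3
  let PC := rangeG ε
  let πC : GHom PC C := (PL.subι _ _).trans (πL.trans q)
  let ψ : GHom PL PC := toRangeG ε
  let PK := ε.ker
  let φ : GHom PK PL := ε.kerι
  have hφ : ∀ x : PK.M, ε.lin (φ.lin x) = 0 := fun x => x.2
  obtain ⟨πK, hπK⟩ := h.factor (φ.trans πL) (fun x => by
    change q.lin (πL.lin (φ.lin x)) = 0
    rw [← e2', hφ, map_zero, map_zero])
  have hπK' : ∀ x : PK.M, i.lin (πK.lin x) = πL.lin (φ.lin x) := hπK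
  have h1 : πL.lin ∘ₗ φ.lin = i.lin ∘ₗ πK.lin := LinearMap.ext fun x => (hπK' x).symm
  have h2 : πC.lin ∘ₗ ψ.lin = q.lin ∘ₗ πL.lin := LinearMap.ext fun x => e2' x
  have cK : Cover s πK := by
    refine ⟨?_, ?_, ?_⟩
    · let f : GHom PL PK := ⟨(LinearMap.id - ε.lin).codRestrict (LinearMap.ker ε.lin) (fun x => by
        rw [LinearMap.mem_ker, LinearMap.sub_apply, map_sub, e1, LinearMap.id_apply, sub_self]),
        fun j x hx => (PL.grading j).sub_mem hx (ε.grad j x hx)⟩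
      refine hL.gp.of_surj_split f φ ?_
      intro x
      refine Subtype.ext ?_
      change φ.lin x - ε.lin (φ.lin x) = φ.lin x
      rw [hφ, sub_zero]
    · rw [← LinearMap.range_eq_top, eq_top_iff, ← hK, Submodule.span_le]
      intro k hk
      obtain ⟨p, hp, hpk⟩ := πL.surj_deg hL.surj (i.grad _ _ hk)
      have : ε.lin p = 0 := e3' p hp (by rw [hpk]; exact (h.exact _).2 ⟨k, rfl⟩)
      exact ⟨⟨p, this⟩, h.inj ((hπK' ⟨p, this⟩).trans hpk)⟩
    · intro x hx h0
      have := hπK' x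
      rw [h0, map_zero] at this
      exact Subtype.ext (hL.inj _ hx this.symm)
  have cC : Cover s πC := by
    refine ⟨?_, ?_, ?_⟩
    · refine hL.gp.of_surj_split (toRangeG ε) (PL.subι _ _) ?_
      rintro ⟨_, x, rfl⟩
      exact Subtype.ext (e1 x)
    · intro y
      obtain ⟨x, rfl⟩ := hsurj y
      exact ⟨⟨ε.lin x, x, rfl⟩, e2 x⟩
    · rintro ⟨_, x, rfl⟩ hx h0
      refine Subtype.ext ?_
      change ε.lin x = 0
      rw [← e1]
      exact e3 _ hx h0
  refine ⟨PK, PC, πK, πC, φ, ψ, h1, h2, cK, cC, ?_, ?_, ?_⟩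
  · intro x y hxy
    have hxy' : φ.lin x.1 = φ.lin y.1 :=
      congrArg (πL.kerι.lin) hxy
    exact Subtype.ext (Subtype.ext hxy')
  · rintro ⟨⟨_, z, rfl⟩, hz⟩
    change q.lin (πL.lin (ε.lin z)) = 0 at hz
    obtain ⟨k, hk⟩ := (h.exact _).1 hz
    obtain ⟨w, rfl⟩ := cK.surj k
    rw [hπK'] at hk
    refine ⟨⟨ε.lin z - φ.lin w, ?_⟩, ?_⟩
    · rw [LinearMap.mem_ker, map_sub, hk, sub_self]
    · refine Subtype.ext (Subtype.ext ?_)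
      change ε.lin (ε.lin z - φ.lin w) = ε.lin z
      rw [map_sub, hφ, e1, sub_zero]
  · rintro ⟨y, hy⟩
    constructor
    · intro h0
      have h0' : ε.lin y = 0 := congrArg (fun t => (t.1.1 : PL.M)) h0
      refine ⟨⟨⟨y, h0'⟩, ?_⟩, rfl⟩
      refine h.inj (((hπK' ⟨y, h0'⟩).trans ?_).trans (map_zero i.lin).symm)
      exact hy
    · rintro ⟨⟨w, hw⟩, hwy⟩
      have : φ.lin w = y := congrArg Subtype.val hwy
      refine Subtype.ext (Subtype.ext ?_)
      change ε.lin y = 0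
      rw [← this, hφ]

theorem Ses.lin (hA : 𝒜.Standing) {e : ℕ → ℤ} (he : StrictMono e) {K L C : 𝒜.GMod}
    {i : GHom K L} {q : GHom L C} (h : Ses i q) (hK : Lin e K) (hL : Lin e L) : Lin e C := by
  refine ⟨fun e C => StrictMono e ∧ ∃ (K L : 𝒜.GMod) (i : GHom K L) (q : GHom L C),
    Ses i q ∧ Lin e K ∧ Lin e L, ⟨he, K, L, i, q, h, hK, hL⟩, ?_⟩
  clear * - hA
  rintro e C ⟨he, K, L, i, q, h, hK, hL⟩
  obtain ⟨PL, πL, cL, hYL⟩ := hL.cover he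
  obtain ⟨PK, PC, πK, πC, φ, ψ, h1, h2, cK, cC, hs⟩ := h.covers hA hK.gen cL
  exact ⟨PC, πC, cC.surj, cC.gp, strictMono_shift he, _, _, _, _, hs, hK.ker hA he cK, hYL⟩

theorem lin_of_minRes {X : 𝒜.GMod} (R : MinRes X) (e : ℕ → ℤ)
    (h : ∀ n, (R.P n).GenInDeg (e n)) : Lin e X := by
  refine ⟨fun e' X => ∃ (n : ℕ) (π : GHom (R.P n) X), Function.Surjective π.lin ∧
    LinearMap.range (R.d n).lin = LinearMap.ker π.lin ∧ e' = fun m => e (n + m),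
    ⟨0, R.aug, R.aug_surj, R.exact_aug, by simp⟩, ?_⟩
  rintro _ X ⟨n, π, h1, h2, rfl⟩
  refine ⟨R.P n, π, h1, ⟨R.fg n, R.projective n, h n⟩, n + 1,
    ⟨(R.d n).lin.codRestrict (LinearMap.ker π.lin) (fun x => h2 ▸ ⟨x, rfl⟩),
      fun j x hx => (R.d n).grad j x hx⟩, ?_, ?_, ?_⟩
  · rintro ⟨x, hx⟩
    rw [← h2] at hx
    obtain ⟨y, rfl⟩ := hx
    exact ⟨y, rfl⟩
  · rw [R.exact n]
    refine (LinearMap.ker_codRestrict _ _ _).symm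
  · funext m
    exact congrArg e (by ring)

theorem IsTrivialGMod.grading_zero {T : 𝒜.GMod} (h : IsTrivialGMod T) : T.grading 0 = ⊤ := by
  rw [eq_top_iff, ← T.sup_eq_top]
  refine iSup_le fun j => ?_
  by_cases hj : j = 0
  · rw [hj]
  · rw [h.1 j hj]; exact bot_le

/-- killed module concentrated in degree `s` -/
def conc (S : Type) [AddCommGroup S] [Module F S] [Module 𝒜.A S] [IsScalarTower F 𝒜.A S]
    [SMulCommClass 𝒜.A F S] (hS : Kill 𝒜 S) (s : ℤ) : 𝒜.GMod where
  M := S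
  grading j := if j = s then ⊤ else ⊥
  sup_eq_top := by
    rw [eq_top_iff]
    exact le_trans (by simp) (le_iSup _ s)
  indep := by
    refine indep_of_proj _ (fun j => if j = s then LinearMap.id else 0) ?_ ?_
    · intro j x hx
      split_ifs at hx ⊢ <;> simp_all
    · intro i j hij x hx
      split_ifs at hx ⊢ <;> simp_all
  smul_mem := by
    intro i j a m ha hm
    by_cases hi : i = 0
    · subst hi
      split_ifs at hm ⊢ <;> simp_all
    · rw [hS a (mem_jideal_of_mem (by omega) ha)]
      exact Submodule.zero_mem _

theorem mem_conc_self {S : Type} [AddCommGroup S] [Module F S] [Module 𝒜.A S]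
    [IsScalarTower F 𝒜.A S] [SMulCommClass 𝒜.A F S] (hS : Kill 𝒜 S) (s : ℤ) (x : S) :
    x ∈ (conc S hS s).grading s := by
  change x ∈ (if s = s then (⊤ : Submodule F S) else ⊥)
  simp

theorem mem_conc_ne {S : Type} [AddCommGroup S] [Module F S] [Module 𝒜.A S]
    [IsScalarTower F 𝒜.A S] [SMulCommClass 𝒜.A F S] (hS : Kill 𝒜 S) {s j : ℤ} (h : j ≠ s) {x : S}
    (hx : x ∈ (conc S hS s).grading j) : x = 0 := by
  change x ∈ (if j = s then (⊤ : Submodule F S) else ⊥) at hx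
  simpa [h] using hx

/-- killed f.g. modules are retracts of powers of `T` -/
theorem kill_ret (hA : 𝒜.Standing) {T : 𝒜.GMod} (hT : IsTrivialGMod T) {S : Type}
    [AddCommGroup S] [Module 𝒜.A S] (hS : Kill 𝒜 S) [Module.Finite 𝒜.A S] :
    ∃ (m : ℕ) (u : Fin m → (S →ₗ[𝒜.A] T.M)) (v : Fin m → (T.M →ₗ[𝒜.A] S)),
      ∀ x, ∑ a, v a (u a x) = x := by
  obtain ⟨e⟩ := hT.2
  obtain ⟨m, y, hy⟩ := Module.Finite.exists_fin (R := 𝒜.A) (M := S)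
  let v : Fin m → (T.M →ₗ[𝒜.A] S) := fun a =>
    (Submodule.liftQ 𝒜.jideal (LinearMap.toSpanSingleton 𝒜.A S (y a)) (fun b hb => by
      simpa using hS b hb (y a))) ∘ₗ e.toLinearMap
  let V : (Fin m → T.M) →ₗ[𝒜.A] S := ∑ a, v a ∘ₗ LinearMap.proj a
  have hV : Function.Surjective V := by
    rw [← LinearMap.range_eq_top, eq_top_iff, ← hy, Submodule.span_le]
    rintro _ ⟨a, rfl⟩
    refine ⟨Pi.single a (e.symm (Submodule.Quotient.mk 1)), ?_⟩
    simp only [V, LinearMap.sum_apply, LinearMap.comp_apply, LinearMap.proj_apply]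
    rw [Finset.sum_eq_single a]
    · simp only [Pi.single_eq_same, v, LinearMap.comp_apply, LinearEquiv.coe_coe,
        LinearEquiv.apply_symm_apply]
      erw [Submodule.liftQ_apply]
      simp
    · intro b _ hb
      rw [Pi.single_eq_of_ne hb, map_zero]
    · simp
  have := hT.kill.semisimple hA
  obtain ⟨u, hu⟩ := IsSemisimpleModule.lifting_property V hV LinearMap.id
  refine ⟨m, fun a => LinearMap.proj a ∘ₗ u, v, fun x => ?_⟩
  have := LinearMap.congr_fun hu x
  simpa [V, LinearMap.sum_apply] using this

theorem conc_ret {T : 𝒜.GMod} (hT : IsTrivialGMod T) {S : Type}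
    [AddCommGroup S] [Module F S] [Module 𝒜.A S] [IsScalarTower F 𝒜.A S]
    [SMulCommClass 𝒜.A F S] (hS : Kill 𝒜 S) (s : ℤ)
    (hr : ∃ (m : ℕ) (u : Fin m → (S →ₗ[𝒜.A] T.M)) (v : Fin m → (T.M →ₗ[𝒜.A] S)),
      ∀ x, ∑ a, v a (u a x) = x) : IsRet (conc S hS s) (T.shift s) := by
  obtain ⟨m, u, v, h⟩ := hr
  refine ⟨m, fun a => ⟨u a, ?_⟩, fun a => ⟨v a, ?_⟩, h⟩
  · intro j x hx
    change u a x ∈ T.grading (j - s)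
    by_cases hj : j = s
    · rw [hj, sub_self, hT.grading_zero]; trivial
    · rw [mem_conc_ne hS hj hx, map_zero]; exact Submodule.zero_mem _
  · intro j x hx
    by_cases hj : j = s
    · subst hj; exact mem_conc_self hS _ _
    · change x ∈ T.grading (j - s) at hx
      rw [hT.1 _ (by omega)] at hx
      have hx0 : x = (0 : T.M) := (Submodule.mem_bot (M := T.M) F).1 hx
      have h2 : v a x = 0 := hx0 ▸ map_zero (v a)
      exact Eq.subst (motive := fun z => z ∈ (conc S hS s).grading j) h2.symm
        (Submodule.zero_mem ((conc S hS s).grading j))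

/-- the top of a module generated in degree `s` -/
def top (X : 𝒜.GMod) (s : ℤ) (h : X.GenInDeg s) : 𝒜.GMod :=
  conc (X.M ⧸ X.above (s + 1)) (Kill.quot_top h) s

/-- projection to the top -/
def toTop (X : 𝒜.GMod) (s : ℤ) (h : X.GenInDeg s) : GHom X (top X s h) where
  lin := (X.above (s + 1)).mkQ
  grad := fun j x hx => by
    by_cases hj : j = s
    · subst hj; exact mem_conc_self (Kill.quot_top h) _ _
    · have : (X.above (s+1)).mkQ x = 0 := by
        rw [mkQ_comp h, X.comp_of_ne hx hj, map_zero]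
      exact Eq.subst (motive := fun z => z ∈ (top X s h).grading j) this.symm
        (Submodule.zero_mem ((top X s h).grading j))

theorem toTop_surj (X : 𝒜.GMod) (s : ℤ) (h : X.GenInDeg s) :
    Function.Surjective (toTop X s h).lin := Submodule.mkQ_surjective _

/-- the ses `rad → X → top` -/
theorem ker_ses {X Y : 𝒜.GMod} (f : GHom X Y) (hf : Function.Surjective f.lin) : Ses f.kerι f :=
  ⟨Subtype.val_injective, hf, fun x => ⟨fun h => ⟨⟨x, h⟩, rfl⟩, by rintro ⟨y, rfl⟩; exact y.2⟩⟩

theorem lin_finite {e : ℕ → ℤ} {X : 𝒜.GMod} (h : Lin e X) : Module.Finite 𝒜.A X.M := by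
  obtain ⟨P, π, h1, h2, -⟩ := h.out
  have := h2.fin
  exact Module.Finite.of_surjective π.lin h1

/-- graded part of the main lemma -/
theorem main_graded (hA : 𝒜.Standing) {T : 𝒜.GMod} (hT : IsTrivialGMod T) {e : ℕ → ℤ}
    (he : StrictMono e) (hTe : Lin e T) (he0 : e 0 = 0) {M : 𝒜.GMod} {s : ℤ}
    (hM : Lin (fun n => e n + s) M) :
    ∃ (S P : 𝒜.GMod) (π : GHom P M) (ρ : GHom M S),
      (∃ (m : ℕ) (u : Fin m → (S.M →ₗ[𝒜.A] T.M)) (v : Fin m → (T.M →ₗ[𝒜.A] S.M)),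
        ∀ x, ∑ a, v a (u a x) = x) ∧
      Module.Projective 𝒜.A P.M ∧ Function.Surjective π.lin ∧ Function.Surjective ρ.lin ∧
      (∀ f : M.M →ₗ[𝒜.A] T.M, ∃ g : S.M →ₗ[𝒜.A] T.M, g ∘ₗ ρ.lin = f) ∧
      Lin (fun n => e (n + 1) + s) π.ker ∧ Lin (fun n => e (n + 1) + s) (π.trans ρ).ker ∧
      Lin (fun n => e (n + 1) + s) ρ.ker ∧
      Ses (kerMap π (π.trans ρ) (idG P) ρ rfl) (kerMap (π.trans ρ) ρ π (idG S) rfl) := by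
  have he' : StrictMono (fun n => e n + s) := fun _ _ h => by
    have := he h
    simpa using this
  obtain ⟨P, π, cπ, hK⟩ := hM.cover he'
  have hg : M.GenInDeg s := by
    have := hM.gen
    simpa [he0] using this
  have h00 : e 0 + s = s := by rw [he0, zero_add]
  rw [show e 0 + s = s from h00] at cπ
  have hfin := lin_finite hM
  have hret := kill_ret hA hT (Kill.quot_top hg)
  have hS : Lin (fun n => e n + s) (top M s hg) :=
    (hTe.shift s).of_ret hA he' (conc_ret hT (Kill.quot_top hg) s hret)
  have hs := toTop_surj M s hg
  have cρ : Cover s (π.trans (toTop M s hg)) := by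
    refine ⟨cπ.gp, hs.comp cπ.surj, ?_⟩
    intro x hx h0
    exact cπ.inj x hx (mkQ_top_eq_zero (π.grad _ _ hx) h0)
  have hJP : Lin (fun n => e (n + 1) + s) (π.trans (toTop M s hg)).ker := by
    refine hS.ker hA he' (π := π.trans (toTop M s hg)) ?_
    change Cover (e 0 + s) _
    rw [show e 0 + s = s from h00]
    exact cρ
  have hses : Ses (kerMap π (π.trans (toTop M s hg)) (idG P) (toTop M s hg) rfl)
      (kerMap (π.trans (toTop M s hg)) (toTop M s hg) π (idG _) rfl) := by
    refine ⟨?_, ?_, ?_⟩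
    · intro x y hxy
      have : x.1 = y.1 := congrArg ((π.trans (toTop M s hg)).kerι.lin) hxy
      exact Subtype.ext this
    · rintro ⟨y, hy⟩
      obtain ⟨x, rfl⟩ := cπ.surj y
      exact ⟨⟨x, hy⟩, rfl⟩
    · rintro ⟨x, hx⟩
      constructor
      · intro h
        have h' : π.lin x = 0 := congrArg Subtype.val h
        exact ⟨⟨x, h'⟩, rfl⟩
      · rintro ⟨⟨y, hy⟩, hyx⟩
        have : y = x := congrArg Subtype.val hyx
        subst this
        exact Subtype.ext hy
  refine ⟨top M s hg, P, π, toTop M s hg, hret, cπ.gp.proj, cπ.surj, hs, ?_, hK, hJP, ?_, hses⟩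
  · intro f
    refine ⟨Submodule.liftQ _ f (fun x hx => kill_map_above_zero hg hT.kill f hx), ?_⟩
    exact Submodule.liftQ_mkQ _ _ _
  · exact hses.lin hA (strictMono_shift he') hK hJP

/-- degree zero extension -/
theorem Ses.extend (hA : 𝒜.Standing) {s : ℤ} {K L C T : 𝒜.GMod} {i : GHom K L} {q : GHom L C}
    (h : Ses i q) (hK : K.GenInDeg s) (hL : L.GenInDeg s) (hT : Kill 𝒜 T.M)
    (f : K.M →ₗ[𝒜.A] T.M) : ∃ g : L.M →ₗ[𝒜.A] T.M, g ∘ₗ i.lin = f := by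
  let it : (K.M ⧸ K.above (s+1)) →ₗ[𝒜.A] (L.M ⧸ L.above (s+1)) :=
    Submodule.mapQ _ _ i.lin (fun x hx => i.map_above hx)
  have hit : Function.Injective it := by
    rw [injective_iff_map_eq_zero]
    intro x hx
    obtain ⟨x, rfl⟩ := Submodule.Quotient.mk_surjective _ x
    rw [Submodule.Quotient.mk_eq_zero]
    erw [Submodule.mapQ_apply, Submodule.Quotient.mk_eq_zero] at hx
    intro j hj
    apply h.inj
    rw [i.map_comp, hx j hj, map_zero]
  have := (Kill.quot_top hL).semisimple hA
  obtain ⟨g, hg⟩ := IsSemisimpleModule.extension_property it hit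
    (Submodule.liftQ _ f (fun x hx => kill_map_above_zero hK hT f hx))
  refine ⟨g ∘ₗ (L.above (s+1)).mkQ, LinearMap.ext fun x => ?_⟩
  exact LinearMap.congr_fun hg (Submodule.Quotient.mk x)

end LinearModules2

end GradedAlg

namespace GradedAlg

section ExtTools

open CategoryTheory CategoryTheory.Abelian

variable {A : Type} [Ring A]

/-- Ext groups between modules -/
abbrev EX (A : Type) [Ring A] (X Y : Type) [AddCommGroup X] [Module A X] [AddCommGroup Y]
    [Module A Y] (n : ℕ) : Type := Ext.{0} (ModuleCat.of A X) (ModuleCat.of A Y) n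

variable {K L C K' L' C' X Y Z : Type}
  [AddCommGroup K] [Module A K] [AddCommGroup L] [Module A L] [AddCommGroup C] [Module A C]
  [AddCommGroup K'] [Module A K'] [AddCommGroup L'] [Module A L'] [AddCommGroup C'] [Module A C']
  [AddCommGroup X] [Module A X] [AddCommGroup Y] [Module A Y] [AddCommGroup Z] [Module A Z]

/-- degree zero class -/
def mk0 (f : X →ₗ[A] Y) : EX A X Y 0 := Ext.mk₀ (ModuleCat.ofHom f)

/-- short exact sequences -/
structure Ex3 (i : K →ₗ[A] L) (q : L →ₗ[A] C) : Prop where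
  inj : Function.Injective i
  surj : Function.Surjective q
  exact : ∀ x, q x = 0 ↔ ∃ y, i y = x

theorem Ex3.zero {i : K →ₗ[A] L} {q : L →ₗ[A] C} (h : Ex3 i q) : q ∘ₗ i = 0 :=
  LinearMap.ext fun x => (h.exact _).2 ⟨x, rfl⟩

/-- associated short complex -/
def Ex3.sc {i : K →ₗ[A] L} {q : L →ₗ[A] C} (h : Ex3 i q) : ShortComplex (ModuleCat.{0} A) :=
  ShortComplex.mk (ModuleCat.ofHom i) (ModuleCat.ofHom q) (by
    rw [← ModuleCat.ofHom_comp, h.zero]; rfl)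

theorem Ex3.se {i : K →ₗ[A] L} {q : L →ₗ[A] C} (h : Ex3 i q) : h.sc.ShortExact := by
  have : Mono h.sc.f := (ModuleCat.mono_iff_injective _).2 h.inj
  have : Epi h.sc.g := (ModuleCat.epi_iff_surjective _).2 h.surj
  refine ShortComplex.ShortExact.mk ?_
  rw [ShortComplex.moduleCat_exact_iff]
  intro x hx
  exact (h.exact x).1 hx

/-- extension class -/
def Ex3.cls {i : K →ₗ[A] L} {q : L →ₗ[A] C} (h : Ex3 i q) : EX A C K 1 := h.se.extClass

theorem Ex3.cls_nat {i : K →ₗ[A] L} {q : L →ₗ[A] C} (h : Ex3 i q)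
    {i' : K' →ₗ[A] L'} {q' : L' →ₗ[A] C'} (h' : Ex3 i' q') (a : K →ₗ[A] K') (b : L →ₗ[A] L')
    (c : C →ₗ[A] C') (h1 : b ∘ₗ i = i' ∘ₗ a) (h2 : c ∘ₗ q = q' ∘ₗ b) :
    h.cls.comp (mk0 a) (add_zero 1) = (mk0 c).comp h'.cls (zero_add 1) := by
  let f : h.sc ⟶ h'.sc :=
    { τ₁ := ModuleCat.ofHom a
      τ₂ := ModuleCat.ofHom b
      τ₃ := ModuleCat.ofHom c
      comm₁₂ := by
        change ModuleCat.ofHom a ≫ ModuleCat.ofHom i' = ModuleCat.ofHom i ≫ ModuleCat.ofHom b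
        rw [← ModuleCat.ofHom_comp, ← ModuleCat.ofHom_comp, h1]
      comm₂₃ := by
        change ModuleCat.ofHom b ≫ ModuleCat.ofHom q' = ModuleCat.ofHom q ≫ ModuleCat.ofHom c
        rw [← ModuleCat.ofHom_comp, ← ModuleCat.ofHom_comp, h2] }
  exact ShortComplex.ShortExact.extClass_naturality h.se h'.se f

theorem Ex3.ex1 {i : K →ₗ[A] L} {q : L →ₗ[A] C} (h : Ex3 i q) {n m : ℕ} (hn : 1 + n = m)
    (x : EX A K Y n) (hx : h.cls.comp x hn = 0) :
    ∃ y : EX A L Y n, (mk0 i).comp y (zero_add n) = x :=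
  Ext.contravariant_sequence_exact₁ h.se _ x hn hx

theorem Ex3.ex2 {i : K →ₗ[A] L} {q : L →ₗ[A] C} (h : Ex3 i q) {n : ℕ}
    (x : EX A L Y n) (hx : (mk0 i).comp x (zero_add n) = 0) :
    ∃ y : EX A C Y n, (mk0 q).comp y (zero_add n) = x :=
  Ext.contravariant_sequence_exact₂ h.se _ x hx

theorem Ex3.ex3 {i : K →ₗ[A] L} {q : L →ₗ[A] C} (h : Ex3 i q) {n m : ℕ} (hn : 1 + n = m)
    (x : EX A C Y m) (hx : (mk0 q).comp x (zero_add m) = 0) :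
    ∃ y : EX A K Y n, h.cls.comp y hn = x :=
  Ext.contravariant_sequence_exact₃ h.se _ x hx hn

theorem Ex3.z1 {i : K →ₗ[A] L} {q : L →ₗ[A] C} (h : Ex3 i q) {n m : ℕ} (hn : 1 + n = m)
    (x : EX A L Y n) : h.cls.comp ((mk0 i).comp x (zero_add n)) hn = 0 :=
  ShortComplex.ShortExact.extClass_comp_assoc h.se x

theorem Ex3.z3 {i : K →ₗ[A] L} {q : L →ₗ[A] C} (h : Ex3 i q) {n m : ℕ} (hn : 1 + n = m)
    (x : EX A K Y n) : (mk0 q).comp (h.cls.comp x hn) (zero_add m) = 0 :=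
  ShortComplex.ShortExact.comp_extClass_assoc h.se x hn

theorem mk0_comp (f : X →ₗ[A] Y) (g : Y →ₗ[A] Z) :
    (mk0 f).comp (mk0 g) (zero_add 0) = mk0 (g ∘ₗ f) := by
  unfold mk0
  rw [Ext.mk₀_comp_mk₀, ModuleCat.ofHom_comp]

theorem mk0_comp_assoc (f : X →ₗ[A] Y) (g : Y →ₗ[A] Z) {n : ℕ} (x : EX A Z C n) :
    (mk0 f).comp ((mk0 g).comp x (zero_add n)) (zero_add n) =
      (mk0 (g ∘ₗ f)).comp x (zero_add n) := by
  rw [← mk0_comp, Ext.comp_assoc_of_second_deg_zero]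

theorem mk0_surj (x : EX A X Y 0) : ∃ f : X →ₗ[A] Y, mk0 f = x := by
  obtain ⟨f, hf⟩ := (Ext.mk₀_bijective (ModuleCat.of A X) (ModuleCat.of A Y)).2 x
  exact ⟨f.hom, hf⟩

theorem mk0_inj {f g : X →ₗ[A] Y} (h : mk0 f = mk0 g) : f = g := by
  have := (Ext.mk₀_bijective (ModuleCat.of A X) (ModuleCat.of A Y)).1 h
  exact congrArg ModuleCat.Hom.hom this

theorem mk0_zero : mk0 (0 : X →ₗ[A] Y) = 0 := by
  unfold mk0
  exact Ext.mk₀_zero _ _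

theorem mk0_add (f g : X →ₗ[A] Y) : mk0 (f + g) = mk0 f + mk0 g := by
  unfold mk0
  rw [← Ext.mk₀_add]; rfl

theorem mk0_sum {ι : Type} (s : Finset ι) (f : ι → (X →ₗ[A] Y)) :
    mk0 (∑ a ∈ s, f a) = ∑ a ∈ s, mk0 (f a) :=
  map_sum (⟨⟨mk0, mk0_zero⟩, mk0_add⟩ : (X →ₗ[A] Y) →+ EX A X Y 0) f s

theorem mk0_id_comp {n : ℕ} (x : EX A X Y n) :
    (mk0 (LinearMap.id : X →ₗ[A] X)).comp x (zero_add n) = x := Ext.mk₀_id_comp x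

theorem comp_mk0_id {n : ℕ} (x : EX A X Y n) :
    x.comp (mk0 (LinearMap.id : Y →ₗ[A] Y)) (add_zero n) = x := Ext.comp_mk₀_id x

theorem ext_proj [h : Module.Projective A X] {n : ℕ} (x : EX A X Y (n + 1)) : x = 0 := by
  have : Projective (ModuleCat.of A X) := (IsProjective.iff_projective X).1 h
  exact Ext.eq_zero_of_projective x

/-- dimension shift surjectivity -/
theorem Ex3.shift_surj {i : K →ₗ[A] L} {q : L →ₗ[A] C} (h : Ex3 i q) [Module.Projective A L]
    {n m : ℕ} (hn : 1 + n = m) (x : EX A C Y m) : ∃ y : EX A K Y n, h.cls.comp y hn = x := by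
  obtain rfl : m = n + 1 := by omega
  exact h.ex3 hn x (ext_proj _)

/-- dimension shift injectivity -/
theorem Ex3.shift_inj {i : K →ₗ[A] L} {q : L →ₗ[A] C} (h : Ex3 i q) [Module.Projective A L]
    (h0 : ∀ f : L →ₗ[A] Y, f ∘ₗ i = 0) {n m : ℕ} (hn : 1 + n = m) (x : EX A K Y n)
    (hx : h.cls.comp x hn = 0) : x = 0 := by
  obtain ⟨y, rfl⟩ := h.ex1 hn x hx
  cases n with
  | zero =>
    obtain ⟨f, rfl⟩ := mk0_surj y
    rw [mk0_comp, h0, mk0_zero]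
  | succ n => rw [ext_proj y, Ext.comp_zero]

end ExtTools

section LinExt

open CategoryTheory CategoryTheory.Abelian

variable {F : Type} [Field F] {𝒜 : GradedAlg F}

theorem Ses.ex3 {K L C : 𝒜.GMod} {i : GHom K L} {q : GHom L C} (h : Ses i q) :
    Ex3 i.lin q.lin := ⟨h.inj, h.surj, h.exact⟩

theorem kerMap_comm {P X Q Y : 𝒜.GMod} (π : GHom P X) (ρ : GHom Q Y) (U : GHom P Q) (u : GHom X Y)
    (h : ρ.lin ∘ₗ U.lin = u.lin ∘ₗ π.lin) :
    U.lin ∘ₗ π.kerι.lin = ρ.kerι.lin ∘ₗ (kerMap π ρ U u h).lin := rfl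

theorem ext_cover_surj {P X Q Y T : 𝒜.GMod} (π : GHom P X) (ρ : GHom Q Y) (U : GHom P Q)
    (u : GHom X Y) (h : ρ.lin ∘ₗ U.lin = u.lin ∘ₗ π.lin) (hπ : Function.Surjective π.lin)
    (hρ : Function.Surjective ρ.lin) (hP : Module.Projective 𝒜.A P.M) (n : ℕ)
    (ih : ∀ x : EX 𝒜.A π.ker.M T.M n, ∃ y : EX 𝒜.A ρ.ker.M T.M n,
      (mk0 (kerMap π ρ U u h).lin).comp y (zero_add n) = x) (x : EX 𝒜.A X.M T.M (n + 1)) :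
    ∃ y : EX 𝒜.A Y.M T.M (n + 1), (mk0 u.lin).comp y (zero_add (n + 1)) = x := by
  obtain ⟨z, rfl⟩ := (ker_ses π hπ).ex3.shift_surj (add_comm 1 n) x
  obtain ⟨w, rfl⟩ := ih z
  refine ⟨(ker_ses ρ hρ).ex3.cls.comp w (add_comm 1 n), ?_⟩
  have := (ker_ses π hπ).ex3.cls_nat (ker_ses ρ hρ).ex3 (kerMap π ρ U u h).lin U.lin u.lin
    (kerMap_comm π ρ U u h) h.symm
  rw [← Ext.comp_assoc (a₁₂ := 1) _ _ _ (zero_add 1) (by omega) (by omega), ← this,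
    Ext.comp_assoc_of_second_deg_zero]

theorem Ses.ext_surj (hA : 𝒜.Standing) {T : 𝒜.GMod} (hT : Kill 𝒜 T.M) (n : ℕ) {e : ℕ → ℤ}
    (he : StrictMono e) {K L C : 𝒜.GMod} {i : GHom K L} {q : GHom L C} (h : Ses i q)
    (hK : Lin e K) (hL : Lin e L) (x : EX 𝒜.A K.M T.M n) :
    ∃ y : EX 𝒜.A L.M T.M n, (mk0 i.lin).comp y (zero_add n) = x := by
  induction n generalizing e K L C with
  | zero =>
    obtain ⟨f, rfl⟩ := mk0_surj x
    obtain ⟨g, rfl⟩ := h.extend hA hK.gen hL.gen hT f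
    exact ⟨mk0 g, mk0_comp _ _⟩
  | succ n ih =>
    obtain ⟨PL, πL, cL, hYL⟩ := hL.cover he
    obtain ⟨PK, PC, πK, πC, φ, ψ, h1, h2, cK, cC, hs⟩ := h.covers hA hK.gen cL
    exact ext_cover_surj πK πL φ i h1 cK.surj cL.surj cK.gp.proj n
      (fun x => ih (strictMono_shift he) hs (hK.ker hA he cK) hYL x) x

theorem Lin.shift_class {T : 𝒜.GMod} (hT : Kill 𝒜 T.M) (r : ℕ) {e : ℕ → ℤ}
    (he : StrictMono e) {X : 𝒜.GMod} (hX : Lin e X) :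
    ∃ (Y : 𝒜.GMod) (c : EX 𝒜.A X.M Y.M r), Lin (fun n => e (n + r)) Y ∧
      ∀ (n m : ℕ) (h : r + n = m),
        Function.Bijective (fun y : EX 𝒜.A Y.M T.M n => c.comp y h) := by
  induction r generalizing e X with
  | zero =>
    refine ⟨X, mk0 LinearMap.id, hX, ?_⟩
    intro n m h
    obtain rfl : n = m := by omega
    have : (fun y : EX 𝒜.A X.M T.M n =>
        (mk0 (LinearMap.id : X.M →ₗ[𝒜.A] X.M)).comp y h) = id := by
      funext y; exact mk0_id_comp y
    rw [this]; exact Function.bijective_id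
  | succ r ih =>
    obtain ⟨P, π, cπ, hK⟩ := hX.cover he
    obtain ⟨Y, c, hY, hc⟩ := ih (strictMono_shift he) hK
    have := cπ.gp.proj
    let hs := (ker_ses π cπ.surj).ex3
    refine ⟨Y, hs.cls.comp c (add_comm 1 r), ?_, ?_⟩
    · exact hY
    · intro n m h
      have e1 : (fun y : EX 𝒜.A Y.M T.M n => (hs.cls.comp c (add_comm 1 r)).comp y h) =
          (fun z : EX 𝒜.A π.ker.M T.M (r + n) => hs.cls.comp z (by omega)) ∘
          (fun y => c.comp y rfl) := by
        funext y
        exact Ext.comp_assoc _ _ _ _ _ (by omega)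
      rw [e1]
      refine Function.Bijective.comp ⟨?_, ?_⟩ (hc n _ rfl)
      · intro x y hxy
        rw [← sub_eq_zero]
        refine hs.shift_inj ?_ (n := r + n) (m := m) (by omega) _ ?_
        · intro f
          refine LinearMap.ext fun x => ?_
          refine kill_map_above_zero cπ.gp.gen hT f ?_
          have h3 := hK.gen.mem_above x
          intro j hj
          have h4 := h3 j (lt_of_lt_of_le hj (by
            have h01 : e 0 < e (0 + 1) := he (by norm_num)
            exact h01))
          exact (P.sub_comp j x).symm.trans (congrArg Subtype.val h4)
        · have : hs.cls.comp x (by omega : 1 + (r + n) = m) = hs.cls.comp y (by omega) := hxy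
          rw [sub_eq_add_neg, Ext.comp_add, Ext.comp_neg, this, add_neg_cancel]
      · intro x
        exact hs.shift_surj (by omega) x

/-- main lemma -/
theorem main_lemma (hA : 𝒜.Standing) {T : 𝒜.GMod} (hT : IsTrivialGMod T) {e : ℕ → ℤ}
    (he : StrictMono e) (hTe : Lin e T) (he0 : e 0 = 0) (r : ℕ) (t : ℤ)
    (hr : ∀ n, e (n + (r + 1)) = e n + t) {M : 𝒜.GMod} {s : ℤ}
    (hM : Lin (fun n => e n + s) M) :
    ∃ (S N : 𝒜.GMod) (ρ : M.M →ₗ[𝒜.A] S.M) (c : EX 𝒜.A S.M N.M (r + 1)),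
      (∃ (m : ℕ) (u : Fin m → (S.M →ₗ[𝒜.A] T.M)) (v : Fin m → (T.M →ₗ[𝒜.A] S.M)),
        ∀ x, ∑ a, v a (u a x) = x) ∧
      Lin (fun n => e n + (s + t)) N ∧
      (∀ n, ∀ x : EX 𝒜.A M.M T.M n, ∃ y : EX 𝒜.A S.M T.M n, (mk0 ρ).comp y (zero_add n) = x) ∧
      (∀ x : EX 𝒜.A S.M T.M 0, (mk0 ρ).comp x (zero_add 0) = 0 → x = 0) ∧
      (∀ n m (h : r + 1 + n = m) (x : EX 𝒜.A N.M T.M n), c.comp x h = 0 → x = 0) ∧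
      (∀ n m (h : r + 1 + n = m) (x : EX 𝒜.A S.M T.M m),
        (mk0 ρ).comp x (zero_add m) = 0 ↔ ∃ y : EX 𝒜.A N.M T.M n, c.comp y h = x) := by
  obtain ⟨S, P, π, ρ, hret, hP, hπ, hρ, hext, l1, l2, l3, hses⟩ := main_graded hA hT he hTe he0 hM
  have he' : StrictMono (fun n => e (n + 1) + s) := fun a b h => by
    have := he (show a + 1 < b + 1 by omega)
    simpa using this
  obtain ⟨N, c, hN, hc⟩ := l3.shift_class hT.kill r he'
  have hs := (ker_ses ρ hρ).ex3
  have surj : ∀ n, ∀ x : EX 𝒜.A M.M T.M n,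
      ∃ y : EX 𝒜.A S.M T.M n, (mk0 ρ.lin).comp y (zero_add n) = x := by
    intro n x
    cases n with
    | zero =>
      obtain ⟨f, rfl⟩ := mk0_surj x
      obtain ⟨g, rfl⟩ := hext f
      exact ⟨mk0 g, mk0_comp _ _⟩
    | succ n =>
      exact ext_cover_surj π (π.trans ρ) (idG P) ρ rfl hπ (hρ.comp hπ) hP n
        (fun x => hses.ext_surj hA hT.kill n he' l1 l2 x) x
  have inj : ∀ n m (h : 1 + n = m) (x : EX 𝒜.A ρ.ker.M T.M n), hs.cls.comp x h = 0 → x = 0 := by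
    intro n m h x hx
    obtain ⟨y, rfl⟩ := hs.ex1 h x hx
    obtain ⟨z, rfl⟩ := surj n y
    rw [mk0_comp_assoc, hs.zero, mk0_zero, Ext.zero_comp]
  refine ⟨S, N, ρ.lin, hs.cls.comp c (add_comm 1 r), hret, ?_, surj, ?_, ?_, ?_⟩
  · have : (fun n => e n + (s + t)) = fun n => e (n + r + 1) + s := by
      funext n
      have := hr n
      rw [← add_assoc] at this
      rw [this]; ring
    rw [this]; exact hN
  · intro x hx
    obtain ⟨f, rfl⟩ := mk0_surj x
    rw [mk0_comp, ← mk0_zero] at hx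
    have h0 := mk0_inj hx
    have : f = 0 := by
      refine LinearMap.ext fun y => ?_
      obtain ⟨z, rfl⟩ := hρ y
      exact LinearMap.congr_fun h0 z
    rw [this, mk0_zero]
  · intro n m h x hx
    rw [Ext.comp_assoc _ _ _ (add_comm 1 r) rfl (by omega)] at hx
    have := inj _ _ (by omega) _ hx
    apply (hc n _ rfl).1
    change c.comp x rfl = c.comp 0 rfl
    rw [this, Ext.comp_zero]
  · intro n m h x
    constructor
    · intro hx
      obtain ⟨y, hy⟩ := hs.ex3 (n := r + n) (by omega) x hx
      obtain ⟨z, hz⟩ := (hc n _ rfl).2 y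
      change c.comp z rfl = y at hz
      refine ⟨z, ?_⟩
      rw [Ext.comp_assoc _ _ _ (add_comm 1 r) rfl (by omega), hz, hy]
    · rintro ⟨y, rfl⟩
      rw [Ext.comp_assoc _ _ _ (add_comm 1 r) rfl (by omega)]
      exact hs.z3 _ _

end LinExt

end GradedAlg

namespace GradedAlg

section ExtAlg

open CategoryTheory CategoryTheory.Abelian

variable (F : Type) [Field F] (A : Type) [Ring A] [Algebra F A] (r : ℕ)
variable (X Y T : Type) [AddCommGroup X] [Module A X] [AddCommGroup Y] [Module A Y]
  [AddCommGroup T] [Module A T]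

/-- the family of Ext groups in degrees divisible by `r` -/
def Ef (n : ℕ) : Type := EX A X T (r * n)

instance Ef.acg (n : ℕ) : AddCommGroup (Ef A r X T n) :=
  inferInstanceAs (AddCommGroup (EX A X T (r * n)))

instance Ef.mod (n : ℕ) : Module F (Ef A r X T n) :=
  inferInstanceAs (Module F (EX A X T (r * n)))

variable {A r X Y T}

/-- action of the Ext algebra -/
def Ef.mul {m n : ℕ} (b : Ef A r T T m) (x : Ef A r X T n) : Ef A r X T (m + n) :=
  Ext.comp (X := ModuleCat.of A X) (Y := ModuleCat.of A T) x b (by ring)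

/-- the unit -/
def Ef.one : Ef A r T T 0 := (mk0 (LinearMap.id : T →ₗ[A] T) : EX A T T 0)

theorem comp_heq {X Y Z : Type} [AddCommGroup X] [Module A X] [AddCommGroup Y] [Module A Y]
    [AddCommGroup Z] [Module A Z] {a b c c' : ℕ} (x : EX A X Y a) (y : EX A Y Z b) (h : a + b = c)
    (h' : a + b = c') : x.comp y h ≍ x.comp y h' := by
  subst h h'; rfl

theorem comp_id_heq {a c : ℕ} (x : EX A X T a) (h : a + 0 = c) :
    x.comp (mk0 (LinearMap.id : T →ₗ[A] T)) h ≍ x := by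
  obtain rfl : a = c := h
  exact heq_of_eq (comp_mk0_id x)

theorem id_comp_heq {a c : ℕ} (x : EX A X T a) (h : 0 + a = c) :
    (mk0 (LinearMap.id : X →ₗ[A] X)).comp x h ≍ x := by
  obtain rfl : a = c := by omega
  exact heq_of_eq (mk0_id_comp x)

theorem Ef.one_mul' {n : ℕ} (x : Ef A r X T n) : Ef.mul Ef.one x ≍ x :=
  comp_id_heq (a := r * n) (c := r * (0 + n)) x (by rw [zero_add]; rfl)

theorem Ef.mul_one' {n : ℕ} (x : Ef A r T T n) : Ef.mul x Ef.one ≍ x :=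
  id_comp_heq (a := r * n) (c := r * (n + 0)) x (by rw [zero_add]; rfl)

theorem Ef.mul_assoc' {l m n : ℕ} (x : Ef A r T T l) (y : Ef A r T T m) (z : Ef A r X T n) :
    Ef.mul (Ef.mul x y) z ≍ Ef.mul x (Ef.mul y z) := by
  have : r * (l + m + n) = r * (l + (m + n)) := by rw [add_assoc]
  have e : r * n + r * m + r * l = r * (l + m + n) := by ring
  have := Ext.comp_assoc (X := ModuleCat.of A X) (Y := ModuleCat.of A T) (Z := ModuleCat.of A T)
    (T := ModuleCat.of A T) (a₁ := r * n) (a₂ := r * m) (a₃ := r * l) (a₁₂ := r * (m + n))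
    (a₂₃ := r * (l + m)) (a := r * (l + m + n)) z y x (by ring) (by ring) (by ring)
  exact (heq_of_eq this.symm).trans (comp_heq (a := r * (m + n)) (b := r * l) _ _ _ _)

theorem Ef.zero_mul' {m n : ℕ} (x : Ef A r X T n) : Ef.mul (0 : Ef A r T T m) x = 0 :=
  Ext.comp_zero (X := ModuleCat.of A X) (Y := ModuleCat.of A T) (n := r * n) x
    (ModuleCat.of A T) (r * m) _ _

theorem Ef.mul_zero' {m n : ℕ} (b : Ef A r T T m) : Ef.mul b (0 : Ef A r X T n) = 0 :=
  Ext.zero_comp (ModuleCat.of A X) (Y := ModuleCat.of A T) (Z := ModuleCat.of A T)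
    (n := r * n) (m := r * m) b _ _

theorem Ef.mul_add' {m n : ℕ} (b : Ef A r T T m) (x y : Ef A r X T n) :
    Ef.mul b (x + y) = Ef.mul b x + Ef.mul b y :=
  Ext.add_comp (X := ModuleCat.of A X) (Y := ModuleCat.of A T) (Z := ModuleCat.of A T)
    (n := r * n) (m := r * m) x y b _

theorem Ef.add_mul' {m n : ℕ} (b c : Ef A r T T m) (x : Ef A r X T n) :
    Ef.mul (b + c) x = Ef.mul b x + Ef.mul c x :=
  Ext.comp_add (X := ModuleCat.of A X) (Y := ModuleCat.of A T) (Z := ModuleCat.of A T)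
    (n := r * n) (m := r * m) x b c _

theorem Ef.smul_mul' (s : F) {m n : ℕ} (b : Ef A r T T m) (x : Ef A r X T n) :
    Ef.mul (s • b) x = s • Ef.mul b x :=
  Ext.comp_smul (X := ModuleCat.of A X) (Y := ModuleCat.of A T) (Z := ModuleCat.of A T)
    (a := r * n) (b := r * m) x b _ s

theorem Ef.mul_smul' (s : F) {m n : ℕ} (b : Ef A r T T m) (x : Ef A r X T n) :
    Ef.mul b (s • x) = s • Ef.mul b x :=
  Ext.smul_comp (X := ModuleCat.of A X) (Y := ModuleCat.of A T) (Z := ModuleCat.of A T)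
    (a := r * n) (b := r * m) x b _ s

attribute [irreducible] Ef.mul Ef.one

theorem Ef.smul_heq (s : F) {m n : ℕ} (h : m = n) {x : Ef A r X T m} {y : Ef A r X T n}
    (hxy : x ≍ y) : s • x ≍ s • y := by
  subst h; rw [eq_of_heq hxy]

instance Ef.gmul : GradedMonoid.GMul (Ef A r T T) where
  mul := Ef.mul

instance Ef.gone : GradedMonoid.GOne (Ef A r T T) where
  one := Ef.one

instance Ef.gmonoid : GradedMonoid.GMonoid (Ef A r T T) where
  one_mul a := Sigma.ext (zero_add a.1) (Ef.one_mul' a.2)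
  mul_one a := Sigma.ext (add_zero a.1) (Ef.mul_one' a.2)
  mul_assoc a b c := Sigma.ext (add_assoc a.1 b.1 c.1) (Ef.mul_assoc' a.2 b.2 c.2)

instance Ef.gring : DirectSum.GRing (Ef A r T T) where
  mul_zero a := Ef.mul_zero' a
  zero_mul b := Ef.zero_mul' b
  mul_add a b c := Ef.mul_add' a b c
  add_mul a b c := Ef.add_mul' a b c
  natCast n := n • Ef.one
  natCast_zero := zero_nsmul _
  natCast_succ n := succ_nsmul _ n
  intCast n := n • Ef.one
  intCast_ofNat n := natCast_zsmul _ n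
  intCast_negSucc_ofNat n := negSucc_zsmul _ n

instance Ef.gmodule : DirectSum.Gmodule (Ef A r T T) (Ef A r X T) where
  smul b x := Ef.mul b x
  one_smul a := Sigma.ext (zero_add a.1) (Ef.one_mul' a.2)
  mul_smul a b c := Sigma.ext (add_assoc a.1 b.1 c.1) (Ef.mul_assoc' a.2 b.2 c.2)
  smul_add a b c := Ef.mul_add' a b c
  smul_zero a := Ef.mul_zero' a
  add_smul a b c := Ef.add_mul' a b c
  zero_smul b := Ef.zero_mul' b

theorem Ef.smul_one_mul (s : F) {n : ℕ} (x : Ef A r X T n) :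
    Ef.mul (s • Ef.one) x ≍ s • x := by
  rw [Ef.smul_mul']
  exact Ef.smul_heq F s (zero_add n) (Ef.one_mul' x)

theorem Ef.mul_smul_one (s : F) {n : ℕ} (x : Ef A r T T n) :
    Ef.mul x (s • Ef.one) ≍ s • x := by
  rw [Ef.mul_smul']
  exact Ef.smul_heq F s (add_zero n) (Ef.mul_one' x)

instance Ef.galg : DirectSum.GAlgebra F (Ef A r T T) where
  toFun := ⟨⟨fun s => s • Ef.one, zero_smul _ _⟩, fun a b => add_smul a b _⟩
  map_one := one_smul _ _
  map_mul a b := by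
    refine Sigma.ext rfl ?_
    have h := (Ef.smul_one_mul F a (b • (Ef.one : Ef A r T T 0))).symm
    rw [← mul_smul] at h
    exact h
  commutes s x := Sigma.ext ((zero_add x.1).trans (add_zero x.1).symm)
    ((Ef.smul_one_mul F s x.2).trans (Ef.mul_smul_one F s x.2).symm)
  smul_def s x := Sigma.ext (zero_add x.1).symm (Ef.smul_one_mul F s x.2).symm

variable (A r X T)

/-- the Ext algebra -/
def BB : Type := DirectSum ℕ (Ef A r T T)

/-- the Ext module -/
def EE : Type := DirectSum ℕ (Ef A r X T)

instance BB.ring : Ring (BB A r T) := inferInstanceAs (Ring (DirectSum ℕ (Ef A r T T)))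
instance BB.alg : Algebra F (BB A r T) := inferInstanceAs (Algebra F (DirectSum ℕ (Ef A r T T)))
instance EE.acg : AddCommGroup (EE A r X T) :=
  inferInstanceAs (AddCommGroup (DirectSum ℕ (Ef A r X T)))
instance EE.modF : Module F (EE A r X T) :=
  inferInstanceAs (Module F (DirectSum ℕ (Ef A r X T)))
instance EE.modB : Module (BB A r T) (EE A r X T) :=
  DirectSum.Gmodule.module (Ef A r T T) (Ef A r X T)

variable {A X T}

/-- inclusion of the component -/
def BB.of (n : ℕ) : Ef A r T T n →ₗ[F] BB A r T := DirectSum.lof F ℕ (Ef A r T T) n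

/-- inclusion of the component -/
def EE.of (n : ℕ) : Ef A r X T n →ₗ[F] EE A r X T := DirectSum.lof F ℕ (Ef A r X T) n

/-- projection to the component -/
def BB.pr (n : ℕ) : BB A r T →ₗ[F] Ef A r T T n := DirectSum.component F ℕ (Ef A r T T) n

/-- projection to the component -/
def EE.pr (n : ℕ) : EE A r X T →ₗ[F] Ef A r X T n := DirectSum.component F ℕ (Ef A r X T) n

variable {r}

theorem BB.of_mul {m n : ℕ} (x : Ef A r T T m) (y : Ef A r T T n) :
    BB.of F r m x * BB.of F r n y = BB.of F r (m + n) (Ef.mul x y) :=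
  DirectSum.of_mul_of x y

theorem EE.of_smul {m n : ℕ} (x : Ef A r T T m) (y : Ef A r X T n) :
    BB.of F r m x • EE.of F r n y = EE.of F r (m + n) (Ef.mul x y) :=
  DirectSum.Gmodule.of_smul_of _ _ x y

theorem BB.one_def : (1 : BB A r T) = BB.of F r 0 Ef.one := rfl

theorem BB.pr_of (n : ℕ) (x : Ef A r T T n) : BB.pr F r n (BB.of F r n x) = x :=
  DirectSum.component.lof_self F n x

theorem EE.pr_of (n : ℕ) (x : Ef A r X T n) : EE.pr F r n (EE.of F r n x) = x :=
  DirectSum.component.lof_self F n x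

theorem BB.pr_of_ne {m n : ℕ} (h : m ≠ n) (x : Ef A r T T m) :
    BB.pr F r n (BB.of F r m x) = 0 := by
  classical
  exact DirectSum.of_eq_of_ne _ _ _ h.symm

theorem EE.pr_of_ne {m n : ℕ} (h : m ≠ n) (x : Ef A r X T m) :
    EE.pr F r n (EE.of F r m x) = 0 := by
  classical
  exact DirectSum.of_eq_of_ne _ _ _ h.symm

theorem BB.ext' {x y : BB A r T} (h : ∀ n, BB.pr F r n x = BB.pr F r n y) : x = y :=
  DFinsupp.ext h

theorem EE.ext' {x y : EE A r X T} (h : ∀ n, EE.pr F r n x = EE.pr F r n y) : x = y :=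
  DFinsupp.ext h

theorem BB.induction {p : BB A r T → Prop} (x : BB A r T) (h0 : p 0)
    (h1 : ∀ n x, p (BB.of F r n x)) (h2 : ∀ x y, p x → p y → p (x + y)) : p x := by
  classical
  exact DirectSum.induction_on x h0 h1 h2

theorem EE.induction {p : EE A r X T → Prop} (x : EE A r X T) (h0 : p 0)
    (h1 : ∀ n x, p (EE.of F r n x)) (h2 : ∀ x y, p x → p y → p (x + y)) : p x := by
  classical
  exact DirectSum.induction_on x h0 h1 h2


theorem EE.smul_assoc' (s : F) (b : BB A r T) (x : EE A r X T) : (s • b) • x = s • (b • x) := by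
    refine BB.induction F (p := fun b => (s • b) • x = s • (b • x)) b ?_ ?_ ?_
    · rw [smul_zero, zero_smul, smul_zero]
    · intro m b
      refine EE.induction F (p := fun x => (s • BB.of F r m b) • x = s • (BB.of F r m b • x)) x ?_ ?_ ?_
      · rw [smul_zero, smul_zero, smul_zero]
      · intro n x
        rw [← (BB.of F r m).map_smul, EE.of_smul, EE.of_smul, Ef.smul_mul', map_smul]
      · intro x y hx hy
        rw [smul_add, smul_add]
        rw [hx, hy, smul_add]
    · intro b c hb hc
      rw [smul_add, add_smul, add_smul, hb, hc, smul_add]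

theorem EE.smul_comm' (s : F) (b : BB A r T) (x : EE A r X T) : b • (s • x) = s • (b • x) := by
    refine BB.induction F (p := fun b => b • (s • x) = s • (b • x)) b ?_ ?_ ?_
    · rw [zero_smul, zero_smul, smul_zero]
    · intro m b
      refine EE.induction F (p := fun x => BB.of F r m b • (s • x) = s • (BB.of F r m b • x)) x ?_ ?_ ?_
      · rw [smul_zero, smul_zero, smul_zero]
      · intro n x
        rw [← (EE.of F r n).map_smul, EE.of_smul, EE.of_smul, Ef.mul_smul', map_smul]
      · intro x y hx hy
        rw [smul_add, smul_add, smul_add, hx, hy, smul_add]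
    · intro b c hb hc
      rw [add_smul, add_smul, hb, hc, smul_add]

instance EE.tower : IsScalarTower F (BB A r T) (EE A r X T) := ⟨EE.smul_assoc' F⟩

instance EE.scomm : SMulCommClass (BB A r T) F (EE A r X T) :=
  ⟨fun b s x => EE.smul_comm' F s b x⟩

/-- linear maps defined on components -/
def EE.desc {Z : Type} [AddCommGroup Z] [Module F Z] (f : ∀ n, Ef A r X T n →ₗ[F] Z) :
    EE A r X T →ₗ[F] Z := DirectSum.toModule F ℕ Z f

theorem EE.desc_of {Z : Type} [AddCommGroup Z] [Module F Z] (f : ∀ n, Ef A r X T n →ₗ[F] Z)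
    (n : ℕ) (x : Ef A r X T n) : EE.desc F f (EE.of F r n x) = f n x :=
  DirectSum.toModule_lof F n x

/-- the regular module -/
def EE.toBB : EE A r T T ≃ₗ[F] BB A r T := LinearEquiv.refl F (DirectSum ℕ (Ef A r T T))

theorem EE.toBB_of (n : ℕ) (x : Ef A r T T n) : EE.toBB F (EE.of F r n x) = BB.of F r n x := rfl

theorem EE.toBB_pr (n : ℕ) (x : EE A r T T) : BB.pr F r n (EE.toBB F x) = EE.pr F r n x := rfl

theorem EE.toBB_smul (b : BB A r T) (x : EE A r T T) : EE.toBB F (b • x) = b * EE.toBB F x := by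
    refine BB.induction F (p := fun b => EE.toBB F (b • x) = b * EE.toBB F x) b ?_ ?_ ?_
    · rw [zero_smul, zero_mul, map_zero]
    · intro m b
      refine EE.induction F (p := fun x => EE.toBB F (BB.of F r m b • x) =
        BB.of F r m b * EE.toBB F x) x ?_ ?_ ?_
      · rw [smul_zero, map_zero, mul_zero]
      · intro n x
        rw [EE.of_smul, EE.toBB_of, EE.toBB_of, BB.of_mul]
      · intro x y hx hy
        rw [smul_add, map_add, map_add, mul_add, hx, hy]
    · intro b c hb hc
      rw [add_smul, add_mul, map_add, hb, hc]

theorem EE.of_heq {m n : ℕ} (h : m = n) {x : Ef A r X T m} {y : Ef A r X T n} (hxy : x ≍ y) :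
    EE.of F r m x = EE.of F r n y := by
  subst h; rw [eq_of_heq hxy]

theorem EE.mem_of_pr (W : Submodule F (EE A r X T)) (z : EE A r X T)
    (h : ∀ n, EE.of F r n (EE.pr F r n z) ∈ W) : z ∈ W := by
  classical
  have := DirectSum.sum_support_of (β := Ef A r X T) z
  have h2 : z = ∑ i ∈ DFinsupp.support z, EE.of F r i (EE.pr F r i z) := this.symm
  rw [h2]
  exact W.sum_mem fun i _ => h i

/-- precomposition with a class -/
def Ef.pre {t : ℕ} (q : ℕ) (ht : t = r * q) (c : EX A X Y t) (n : ℕ) :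
    Ef A r Y T n →ₗ[F] Ef A r X T (n + q) where
  toFun y := Ext.comp (X := ModuleCat.of A X) (Y := ModuleCat.of A Y) (b := r * n) c y
    (by rw [ht]; ring)
  map_add' y z := Ext.comp_add (X := ModuleCat.of A X) (Y := ModuleCat.of A Y)
    (Z := ModuleCat.of A T) (n := t) (m := r * n) c y z _
  map_smul' s y := Ext.comp_smul (X := ModuleCat.of A X) (Y := ModuleCat.of A Y)
    (Z := ModuleCat.of A T) (a := t) (b := r * n) c y _ s

theorem Ef.pre_mul {t : ℕ} (q : ℕ) (ht : t = r * q) (c : EX A X Y t) {m n : ℕ}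
    (b : Ef A r T T m) (y : Ef A r Y T n) :
    Ef.pre F q ht c (m + n) (Ef.mul b y) ≍ Ef.mul b (Ef.pre F q ht c n y) := by
  have e : r * (m + n + q) = r * (m + (n + q)) := by rw [add_assoc]
  unfold Ef.mul
  have := Ext.comp_assoc (X := ModuleCat.of A X) (Y := ModuleCat.of A Y) (Z := ModuleCat.of A T)
    (T := ModuleCat.of A T) (a₁ := t) (a₂ := r * n) (a₃ := r * m) (a₁₂ := r * (n + q))
    (a₂₃ := r * (m + n)) (a := r * (m + (n + q))) c y b (by rw [ht]; ring) (by ring)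
    (by rw [ht]; ring)
  refine HEq.trans ?_ (heq_of_eq this.symm)
  exact comp_heq (a := t) (b := r * (m + n)) _ _ (by rw [ht]; ring) _

/-- precomposition -/
def EE.preF {t : ℕ} (q : ℕ) (ht : t = r * q) (c : EX A X Y t) : EE A r Y T →ₗ[F] EE A r X T :=
  EE.desc F (fun n => (EE.of F r (n + q)).comp (Ef.pre F q ht c n))

theorem EE.preF_of {t : ℕ} (q : ℕ) (ht : t = r * q) (c : EX A X Y t) (n : ℕ) (y : Ef A r Y T n) :
    EE.preF F q ht c (EE.of F r n y) = EE.of F r (n + q) (Ef.pre F q ht c n y) := by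
  unfold EE.preF
  rw [EE.desc_of, LinearMap.comp_apply]

theorem EE.preF_smul {t : ℕ} (q : ℕ) (ht : t = r * q) (c : EX A X Y t) (b : BB A r T)
    (x : EE A r Y T) : EE.preF F q ht c (b • x) = b • EE.preF F q ht c x := by
    refine BB.induction F (p := fun b => EE.preF F q ht c (b • x) = b • EE.preF F q ht c x) b ?_ ?_ ?_
    · rw [zero_smul, zero_smul, map_zero]
    · intro m b
      refine EE.induction F (p := fun x => EE.preF F q ht c (BB.of F r m b • x) =
        BB.of F r m b • EE.preF F q ht c x) x ?_ ?_ ?_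
      · rw [smul_zero, map_zero, smul_zero]
      · intro n x
        rw [EE.of_smul, EE.preF_of, EE.preF_of, EE.of_smul]
        exact EE.of_heq F (add_assoc m n q) (Ef.pre_mul F q ht c b x)
      · intro x y hx hy
        rw [smul_add, map_add, map_add, smul_add, hx, hy]
    · intro b c hb hc
      rw [add_smul, add_smul, map_add, hb, hc]

/-- precomposition as a module map -/
def EE.pre {t : ℕ} (q : ℕ) (ht : t = r * q) (c : EX A X Y t) :
    EE A r Y T →ₗ[BB A r T] EE A r X T where
  toFun := EE.preF F q ht c
  map_add' := map_add _
  map_smul' := EE.preF_smul F q ht c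

theorem EE.pre_of {t : ℕ} (q : ℕ) (ht : t = r * q) (c : EX A X Y t) (n : ℕ) (y : Ef A r Y T n) :
    EE.pre F q ht c (EE.of F r n y) = EE.of F r (n + q) (Ef.pre F q ht c n y) :=
  EE.preF_of F q ht c n y

theorem EE.pr_pre {t : ℕ} (q : ℕ) (ht : t = r * q) (c : EX A X Y t) (n : ℕ) (z : EE A r Y T) :
    EE.pr F r (n + q) (EE.pre F q ht c z) = Ef.pre F q ht c n (EE.pr F r n z) := by
  refine EE.induction F (p := fun z => EE.pr F r (n + q) (EE.pre F q ht c z) =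
    Ef.pre F q ht c n (EE.pr F r n z)) z ?_ ?_ ?_
  · simp only [map_zero]
  · intro m x
    rw [EE.pre_of]
    by_cases h : m = n
    · subst h
      rw [EE.pr_of, EE.pr_of]
    · rw [EE.pr_of_ne F h, EE.pr_of_ne F (by omega), map_zero]
  · intro x y hx hy
    simp only [map_add, hx, hy]

theorem EE.pr_pre_lt {t : ℕ} (q : ℕ) (ht : t = r * q) (c : EX A X Y t) (n : ℕ) (hn : n < q)
    (z : EE A r Y T) : EE.pr F r n (EE.pre F q ht c z) = 0 := by
  refine EE.induction F (p := fun z => EE.pr F r n (EE.pre F q ht c z) = 0) z ?_ ?_ ?_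
  · simp only [map_zero]
  · intro m x
    rw [EE.pre_of]
    exact EE.pr_of_ne F (by omega) _
  · intro x y hx hy
    simp only [map_add, hx, hy, add_zero]

attribute [irreducible] BB EE BB.of EE.of BB.pr EE.pr EE.desc EE.preF EE.pre EE.toBB

end ExtAlg
end GradedAlg

namespace GradedAlg

section Bgr

open CategoryTheory CategoryTheory.Abelian

variable (F : Type) [Field F] {A : Type} [Ring A] [Algebra F A] {r : ℕ}
variable {X Y T : Type} [AddCommGroup X] [Module A X] [AddCommGroup Y] [Module A Y]
  [AddCommGroup T] [Module A T]

theorem indep_of_proj' {ι M : Type} [AddCommGroup M] [Module F M] (G : ι → Submodule F M)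
    (p : ι → M →ₗ[F] M) (h1 : ∀ i, ∀ x ∈ G i, p i x = x)
    (h2 : ∀ i j, i ≠ j → ∀ x ∈ G j, p i x = 0) : iSupIndep G := by
  intro i
  rw [Submodule.disjoint_def]
  intro x hx hx'
  have : (⨆ j, ⨆ (_ : j ≠ i), G j) ≤ LinearMap.ker (p i) := by
    refine iSup_le fun j => iSup_le fun hj => ?_
    intro y hy
    exact h2 i j hj.symm y hy
  rw [← h1 i x hx]
  exact this hx'

variable (A r T) in
/-- grading of the Ext algebra -/
def BB.gr (n : ℕ) : Submodule F (BB A r T) := LinearMap.range (BB.of F r n)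

theorem BB.gr_indep : iSupIndep (BB.gr F A r T) := by
  refine indep_of_proj' F _ (fun i => (BB.of F r i).comp (BB.pr F r i)) ?_ ?_
  · rintro i _ ⟨x, rfl⟩
    rw [LinearMap.comp_apply, BB.pr_of]
  · rintro i j hij _ ⟨x, rfl⟩
    rw [LinearMap.comp_apply, BB.pr_of_ne F hij.symm, map_zero]

theorem BB.gr_top : (⨆ n, BB.gr F A r T n) = ⊤ := by
  rw [eq_top_iff]
  intro x _
  refine BB.induction F (p := fun x => x ∈ ⨆ n, BB.gr F A r T n) x (zero_mem _) ?_ ?_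
  · intro n x
    exact Submodule.mem_iSup_of_mem n ⟨x, rfl⟩
  · intro x y hx hy
    exact add_mem hx hy

instance BB.decomp : DirectSum.Decomposition (BB.gr F A r T) :=
  (DirectSum.isInternal_submodule_of_iSupIndep_of_iSup_eq_top (BB.gr_indep F)
    (BB.gr_top F)).chooseDecomposition

instance BB.gralg : GradedAlgebra (BB.gr F A r T) where
  one_mem := ⟨Ef.one, (BB.one_def F).symm⟩
  mul_mem := by
    rintro m n _ _ ⟨x, rfl⟩ ⟨y, rfl⟩
    exact ⟨_, (BB.of_mul F x y).symm⟩

variable (A r T) in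
/-- the graded Ext algebra -/
def Bg : GradedAlg F where
  A := BB A r T
  grading := BB.gr F A r T

theorem BB.proj0 (a : BB A r T) :
    GradedRing.proj (BB.gr F A r T) 0 a = BB.of F r 0 (BB.pr F r 0 a) := by
  refine BB.induction F (p := fun a => GradedRing.proj (BB.gr F A r T) 0 a =
    BB.of F r 0 (BB.pr F r 0 a)) a ?_ ?_ ?_
  · simp only [map_zero]
  · intro n x
    rw [GradedRing.proj_apply]
    by_cases h : n = 0
    · subst h
      rw [BB.pr_of]
      exact DirectSum.decompose_of_mem_same _ ⟨x, rfl⟩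
    · rw [BB.pr_of_ne F h, map_zero]
      exact DirectSum.decompose_of_mem_ne (i := n) (j := 0) _ ⟨x, rfl⟩ h
  · intro x y hx hy
    simp only [map_add, hx, hy]

theorem BB.mem_j (a : BB A r T) : a ∈ (Bg F A r T).jideal ↔ BB.pr F r 0 a = 0 := by
  refine (mem_jideal (𝒜 := Bg F A r T) (a := a)).trans ?_
  have h := BB.proj0 F a
  constructor
  · intro h'
    have h2 : BB.of F r 0 (BB.pr F r 0 a) = 0 := h.symm.trans h'
    have h3 := congrArg (BB.pr F r 0) h2
    rwa [BB.pr_of, map_zero] at h3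
  · intro h'
    exact h.trans (by rw [h', map_zero]; rfl)

variable (r T X) in
/-- grading on the Ext module -/
def EE.gr (s j : ℤ) : Submodule F (EE A r X T) where
  carrier := {x | ∀ n : ℕ, (n : ℤ) + s ≠ j → EE.pr F r n x = 0}
  add_mem' hx hy n hn := by rw [map_add, hx n hn, hy n hn, add_zero]
  zero_mem' n hn := map_zero _
  smul_mem' c x hx n hn := by rw [map_smul, hx n hn, smul_zero]

theorem EE.mem_gr {s j : ℤ} {x : EE A r X T} :
    x ∈ EE.gr F r X T s j ↔ ∀ n : ℕ, (n : ℤ) + s ≠ j → EE.pr F r n x = 0 := Iff.rfl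

theorem EE.of_mem_gr (s : ℤ) (n : ℕ) (x : Ef A r X T n) :
    EE.of F r n x ∈ EE.gr F r X T s (n + s) := by
  intro m hm
  refine EE.pr_of_ne F ?_ x
  rintro rfl
  exact hm rfl

theorem EE.gr_cases {s j : ℤ} {x : EE A r X T} (hx : x ∈ EE.gr F r X T s j) :
    x = 0 ∨ ∃ (n : ℕ) (y : Ef A r X T n), (n : ℤ) + s = j ∧ x = EE.of F r n y := by
  by_cases h : ∃ n : ℕ, (n : ℤ) + s = j
  · obtain ⟨n, hn⟩ := h
    refine Or.inr ⟨n, EE.pr F r n x, hn, EE.ext' F fun m => ?_⟩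
    by_cases hm : m = n
    · subst hm; rw [EE.pr_of]
    · rw [EE.pr_of_ne F (Ne.symm hm)]
      exact hx m (by omega)
  · left
    refine EE.ext' F fun m => ?_
    rw [map_zero]
    exact hx m fun h' => h ⟨m, h'⟩

variable (r T X) in
/-- graded Ext modules -/
def Eg (s : ℤ) : (Bg F A r T).GMod where
  M := EE A r X T
  acg := inferInstance
  modF := inferInstance
  modA := EE.modB A r X T
  tower := EE.tower F
  scomm := EE.scomm F
  grading := EE.gr F r X T s
  sup_eq_top := by
    rw [eq_top_iff]
    intro x _
    refine EE.induction F (p := fun x => x ∈ ⨆ n, EE.gr F r X T s n) x (zero_mem _) ?_ ?_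
    · intro n x
      exact Submodule.mem_iSup_of_mem _ (EE.of_mem_gr F s n x)
    · intro x y hx hy
      exact add_mem hx hy
  indep := by
    classical
    refine indep_of_proj' F _ (fun j => if h : 0 ≤ j - s then
      (EE.of F r (j-s).toNat).comp (EE.pr F r (j-s).toNat) else 0) ?_ ?_
    · intro j x hx
      rcases EE.gr_cases F hx with rfl | ⟨n, y, hn, rfl⟩
      · exact map_zero _
      · have : (j - s).toNat = n := by omega
        rw [dif_pos (by omega), this, LinearMap.comp_apply, EE.pr_of]
    · intro i j hij x hx
      rcases EE.gr_cases F hx with rfl | ⟨n, y, hn, rfl⟩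
      · exact map_zero _
      · split_ifs with h
        · rw [LinearMap.comp_apply, EE.pr_of_ne F (by omega), map_zero]
        · rfl
  smul_mem := by
    rintro m j _ x ⟨b, rfl⟩ hx
    rcases EE.gr_cases F hx with rfl | ⟨n, y, rfl, rfl⟩
    · have : BB.of F r m b • (0 : EE A r X T) = 0 := smul_zero _
      exact Eq.subst (motive := fun z => z ∈ EE.gr F r X T s _) this.symm (zero_mem _)
    · have := EE.of_mem_gr F s (m + n) (Ef.mul b y)
      rw [← EE.of_smul] at this
      have h2 : ((m + n : ℕ) : ℤ) + s = m + (n + s) := by push_cast; ring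
      rw [h2] at this
      exact this

end Bgr
end GradedAlg

namespace GradedAlg

section Res

open CategoryTheory CategoryTheory.Abelian

variable (F : Type) [Field F] {A : Type} [Ring A] [Algebra F A] {r : ℕ}
variable {X Y T : Type} [AddCommGroup X] [Module A X] [AddCommGroup Y] [Module A Y]
  [AddCommGroup T] [Module A T]

/-- pullback along a linear map -/
def EE.pre0 (f : X →ₗ[A] Y) : EE A r Y T →ₗ[BB A r T] EE A r X T :=
  EE.pre F 0 (Nat.mul_zero r).symm (mk0 f)

theorem Ef.pre_eq {t : ℕ} (q : ℕ) (ht : t = r * q) (c : EX A X Y t) (n : ℕ)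
    (y : Ef A r Y T n) (h : t + r * n = r * (n + q)) :
    Ef.pre F q ht c n y = Ext.comp (X := ModuleCat.of A X) (Y := ModuleCat.of A Y)
      (Z := ModuleCat.of A T) (b := r * n) c y h := rfl

theorem EE.pre0_of (f : X →ₗ[A] Y) (n : ℕ) (y : Ef A r Y T n) :
    EE.pre0 F f (EE.of F r n y) = EE.of F r n
      (show EX A X T (r * n) from (mk0 f).comp (show EX A Y T (r * n) from y) (zero_add _)) :=
  EE.pre_of F 0 _ _ n y

theorem EE.pr_pre0 (f : X →ₗ[A] Y) (n : ℕ) (y : EE A r Y T) :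
    EE.pr F r n (EE.pre0 F f y) =
      (show EX A X T (r * n) from (mk0 f).comp
        (show EX A Y T (r * n) from EE.pr F r n y) (zero_add _)) :=
  EE.pr_pre F 0 _ _ n y

theorem EE.sum_pre0 {m : ℕ} (u : Fin m → (X →ₗ[A] T)) (v : Fin m → (T →ₗ[A] X))
    (h : ∀ x, ∑ a, v a (u a x) = x) (z : EE A r X T) :
    ∑ a, EE.pre0 F (u a) (EE.pre0 F (v a) z) = z := by
  refine EE.ext' F fun n => ?_
  rw [map_sum]
  have h1 : ∀ a, EE.pr F r n (EE.pre0 F (u a) (EE.pre0 F (v a) z)) =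
      (show EX A X T (r * n) from (mk0 ((v a) ∘ₗ (u a))).comp
        (show EX A X T (r * n) from EE.pr F r n z) (zero_add _)) := by
    intro a
    refine (EE.pr_pre0 F _ _ _).trans ?_
    refine (congrArg (fun w : EX A T T (r * n) => (mk0 (u a)).comp w (zero_add _))
      (EE.pr_pre0 F (v a) n z)).trans ?_
    exact mk0_comp_assoc _ _ _
  rw [Finset.sum_congr rfl fun a _ => h1 a]
  have h2 : ∑ a, (v a) ∘ₗ (u a) = LinearMap.id := by
    ext x
    simpa using h x
  have h3 := mk0_id_comp (show EX A X T (r * n) from EE.pr F r n z)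
  rw [← h2, mk0_sum] at h3
  refine Eq.trans ?_ h3
  exact (Ext.sum_comp (X := ModuleCat.of A X) _ _ _).symm

variable (A r T) in
/-- the regular module, linear over the Ext algebra -/
def EE.toBBl : EE A r T T ≃ₗ[BB A r T] BB A r T :=
  { EE.toBB F with map_smul' := EE.toBB_smul F }

theorem EE.toBBl_apply (x : EE A r T T) : EE.toBBl F A r T x = EE.toBB F x := rfl

theorem EE.eq_smul_one (w : EE A r T T) :
    w = EE.toBB F w • EE.of F r 0 (Ef.one : Ef A r T T 0) := by
  apply (EE.toBB F).injective
  rw [EE.toBB_smul, EE.toBB_of, ← BB.one_def, mul_one]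

section Retract

variable {m : ℕ} (u : Fin m → (X →ₗ[A] T)) (v : Fin m → (T →ₗ[A] X))

/-- splitting -/
def EE.retF : EE A r X T →ₗ[BB A r T] (Fin m → EE A r T T) :=
  LinearMap.pi fun a => EE.pre0 F (v a)

/-- splitting -/
def EE.retG : (Fin m → EE A r T T) →ₗ[BB A r T] EE A r X T :=
  ∑ a, (EE.pre0 F (u a)).comp (LinearMap.proj a)

theorem EE.retGF (h : ∀ x, ∑ a, v a (u a x) = x) : (EE.retG F (r := r) u).comp (EE.retF F v) = LinearMap.id := by
  refine LinearMap.ext fun z => ?_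
  rw [LinearMap.comp_apply, EE.retG, LinearMap.sum_apply]
  exact EE.sum_pre0 F u v h z

theorem EE.ret_finite (F : Type) [Field F] [Algebra F A] (h : ∀ x, ∑ a, v a (u a x) = x) :
    Module.Finite (BB A r T) (EE A r X T) := by
  have : Module.Finite (BB A r T) (EE A r T T) := Module.Finite.equiv (EE.toBBl F A r T).symm
  refine Module.Finite.of_surjective (EE.retG F u) fun z => ⟨EE.retF F v z, ?_⟩
  exact LinearMap.congr_fun (EE.retGF F u v h) z

theorem EE.ret_proj (F : Type) [Field F] [Algebra F A] (h : ∀ x, ∑ a, v a (u a x) = x) :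
    Module.Projective (BB A r T) (EE A r X T) := by
  have : Module.Projective (BB A r T) (EE A r T T) :=
    Module.Projective.of_equiv (EE.toBBl F A r T).symm
  have h2 : Module.Projective (BB A r T) (Fin m → EE A r T T) :=
    Module.Projective.of_equiv (DFinsupp.linearEquivFunOnFintype (R := BB A r T)
      (M := fun _ : Fin m => EE A r T T))
  exact Module.Projective.of_split _ _ (EE.retGF F u v h)

theorem EE.ret_sum (h : ∀ x, ∑ a, v a (u a x) = x)
    (z : EE A r X T) :
    z = ∑ a, EE.toBB F (EE.pre0 F (v a) z) • EE.pre0 F (u a) (EE.of F r 0 Ef.one) := by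
  refine (EE.sum_pre0 F u v h z).symm.trans (Finset.sum_congr rfl fun a _ => ?_)
  rw [← LinearMap.map_smul, ← EE.eq_smul_one]

theorem EE.ret_gen (h : ∀ x, ∑ a, v a (u a x) = x) (s : ℤ) :
    Submodule.span (BB A r T) (EE.gr (A := A) F r X T s s : Set (EE A r X T)) = ⊤ := by
  rw [eq_top_iff]
  intro z _
  rw [EE.ret_sum F u v h z]
  refine Submodule.sum_mem _ fun a _ => Submodule.smul_mem _ _ (Submodule.subset_span ?_)
  rw [EE.pre0_of]
  have := EE.of_mem_gr F (X := X) (T := T) (A := A) (r := r) s 0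
  simp only [Nat.cast_zero, zero_add] at this
  exact this _

theorem EE.ret_min (h : ∀ x, ∑ a, v a (u a x) = x) (J : Ideal (BB A r T))
    (hJ : ∀ a, a ∈ J ↔ BB.pr F r 0 a = 0)
    (z : EE A r X T) (hz : EE.pr F r 0 z = 0) :
    z ∈ J • (⊤ : Submodule (BB A r T) (EE A r X T)) := by
  rw [EE.ret_sum F u v h z]
  refine Submodule.sum_mem _ fun a _ => Submodule.smul_mem_smul ?_ trivial
  rw [hJ, EE.toBB_pr, EE.pr_pre0, hz]
  exact Ext.comp_zero (X := ModuleCat.of A T) (Y := ModuleCat.of A X) _ _ _ _ _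

end Retract

theorem EE.pre_inj {c : EX A X Y r} (hc : ∀ (n m : ℕ) (h : r + n = m) (x : EX A Y T n),
    c.comp x h = 0 → x = 0) (z : EE A r Y T)
    (hz : EE.pre F 1 (Nat.mul_one r).symm c z = 0) : z = 0 := by
  refine EE.ext' F fun n => ?_
  have := EE.pr_pre F 1 (Nat.mul_one r).symm c n z
  rw [hz, map_zero] at this
  rw [map_zero]
  exact hc (r * n) _ (by ring) _ this.symm

end Res
end GradedAlg

namespace GradedAlg

section Res2

open CategoryTheory CategoryTheory.Abelian

variable (F : Type) [Field F] {A : Type} [Ring A] [Algebra F A] {r : ℕ}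
variable {X Y Z T : Type} [AddCommGroup X] [Module A X] [AddCommGroup Y] [Module A Y]
  [AddCommGroup Z] [Module A Z] [AddCommGroup T] [Module A T]

/-- differential -/
def EE.df (c : EX A X Y r) (ρ : Y →ₗ[A] Z) : EE A r Z T →ₗ[BB A r T] EE A r X T :=
  (EE.pre F 1 (Nat.mul_one r).symm c).comp (EE.pre0 F ρ)

theorem EE.df_of (c : EX A X Y r) (ρ : Y →ₗ[A] Z) (n : ℕ) (y : Ef A r Z T n)
    (h : r + r * n = r * (n + 1)) :
    EE.df F c ρ (EE.of F r n y) = EE.of F r (n + 1)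
      (show EX A X T (r * (n + 1)) from c.comp ((mk0 ρ).comp (show EX A Z T (r * n) from y)
        (zero_add _)) h) := by
  exact (congrArg (EE.pre F 1 (Nat.mul_one r).symm c) (EE.pre0_of F ρ n y)).trans
    (EE.pre_of F 1 _ c n _)

theorem EE.df_gr (c : EX A X Y r) (ρ : Y →ₗ[A] Z) (s j : ℤ) (x : EE A r Z T)
    (hx : x ∈ EE.gr F r Z T (s + 1) j) : EE.df F c ρ x ∈ EE.gr F r X T s j := by
  rcases EE.gr_cases F hx with rfl | ⟨n, y, rfl, rfl⟩
  · rw [map_zero]; exact zero_mem _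
  · rw [EE.df_of F c ρ n y (by ring)]
    have := EE.of_mem_gr F (A := A) (X := X) (T := T) (r := r) s (n + 1)
    have h2 : ((n + 1 : ℕ) : ℤ) + s = n + (s + 1) := by push_cast; ring
    rw [h2] at this
    exact this _

theorem EE.df_pr (c : EX A X Y r) (ρ : Y →ₗ[A] Z) (z : EE A r Z T) :
    EE.pr F r 0 (EE.df F c ρ z) = 0 := by
  unfold EE.df
  rw [LinearMap.comp_apply]
  exact EE.pr_pre_lt F 1 _ c 0 Nat.one_pos _

theorem EE.range_df_of (c : EX A X Y r) (ρ : Y →ₗ[A] Z)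
    (hρ : ∀ n, ∀ x : EX A Y T n, ∃ y : EX A Z T n, (mk0 ρ).comp y (zero_add n) = x)
    (z : EE A r X T) (h0 : EE.pr F r 0 z = 0)
    (h : ∀ n (h : r + r * n = r * (n + 1)), ∃ y : EX A Y T (r * n), c.comp y h =
      (show EX A X T (r * (n + 1)) from EE.pr F r (n + 1) z)) :
    z ∈ LinearMap.range (EE.df F (T := T) c ρ) := by
  refine EE.mem_of_pr F ((LinearMap.range (EE.df F (T := T) c ρ)).restrictScalars F) z fun n => ?_
  cases n with
  | zero => rw [h0, map_zero]; exact zero_mem _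
  | succ n =>
    obtain ⟨y, hy⟩ := h n (by ring)
    obtain ⟨w, rfl⟩ := hρ _ y
    exact ⟨EE.of F r n w, (EE.df_of F c ρ n w (by ring)).trans
      (congrArg (EE.of F r (n + 1)) hy)⟩

theorem EE.df_exact {X' Y' : Type} [AddCommGroup X'] [Module A X'] [AddCommGroup Y']
    [Module A Y']
    (c : EX A X Y r) (ρ : Y →ₗ[A] Z) (c' : EX A Z Y' r) (ρ' : Y' →ₗ[A] X')
    (hc : ∀ (n m : ℕ) (h : r + n = m) (x : EX A Y T n), c.comp x h = 0 → x = 0)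
    (h0 : ∀ x : EX A Z T 0, (mk0 ρ).comp x (zero_add 0) = 0 → x = 0)
    (hρ' : ∀ n, ∀ x : EX A Y' T n, ∃ y : EX A X' T n, (mk0 ρ').comp y (zero_add n) = x)
    (hex : ∀ (n m : ℕ) (h : r + n = m) (x : EX A Z T m),
      (mk0 ρ).comp x (zero_add m) = 0 ↔ ∃ y : EX A Y' T n, c'.comp y h = x) :
    LinearMap.range (EE.df F (T := T) c' ρ') = LinearMap.ker (EE.df F (T := T) c ρ) := by
  apply le_antisymm
  · rintro _ ⟨z, rfl⟩
    rw [LinearMap.mem_ker]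
    refine EE.induction F (p := fun z => EE.df F c ρ (EE.df F c' ρ' z) = 0) z ?_ ?_ ?_
    · simp only [map_zero]
    · intro n y
      refine (congrArg (EE.df F c ρ) (EE.df_of F c' ρ' n y (by ring))).trans ?_
      refine (EE.df_of F c ρ (n + 1) _ (by ring)).trans ?_
      have := (hex (r * n) (r * (n + 1)) (by ring) _).2
        ⟨(mk0 ρ').comp (show EX A X' T (r * n) from y) (zero_add _), rfl⟩
      refine (congrArg (EE.of F r (n + 1 + 1)) (Eq.trans ?_ (Ext.comp_zero
        (X := ModuleCat.of A X) (Y := ModuleCat.of A Y) (n := r) c (ModuleCat.of A T)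
        (r * (n + 1)) (r * (n + 1 + 1)) (by ring)))).trans (map_zero _)
      exact congrArg (fun w : EX A Y T (r * (n + 1)) => c.comp w _) this
    · intro x y hx hy
      simp only [map_add, hx, hy, add_zero]
  · intro z hz
    rw [LinearMap.mem_ker] at hz
    unfold EE.df at hz
    rw [LinearMap.comp_apply] at hz
    have hz' := EE.pre_inj F hc _ hz
    have hn : ∀ n, (mk0 ρ).comp (show EX A Z T (r * n) from EE.pr F r n z) (zero_add _) = 0 := by
      intro n
      have := EE.pr_pre0 F ρ n z
      rw [hz', map_zero] at this
      exact this.symm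
    refine EE.range_df_of F c' ρ' hρ' z (h0 _ (hn 0)) fun n h => ?_
    exact (hex _ _ h _).1 (hn (n + 1))

end Res2

section Res3

open CategoryTheory CategoryTheory.Abelian

variable {F : Type} [Field F] {𝒜 : GradedAlg F}

/-- the trivial module over the Ext algebra -/
def Bt (ℬ : GradedAlg F) : ℬ.GMod := conc (ℬ.A ⧸ ℬ.jideal) kill_quot 0

theorem Bt_trivial (ℬ : GradedAlg F) : IsTrivialGMod (Bt ℬ) :=
  ⟨fun _ hj => if_neg hj, ⟨LinearEquiv.refl _ _⟩⟩

theorem Bt_mem (ℬ : GradedAlg F) (x : ℬ.A ⧸ ℬ.jideal) :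
    (show (Bt ℬ).M from x) ∈ (Bt ℬ).grading 0 := mem_conc_self kill_quot 0 x

variable (r : ℕ) (S N : ℕ → 𝒜.GMod) (ρ : ∀ i, (N i).M →ₗ[𝒜.A] (S (i + 1)).M)
  (c : ∀ i, EX 𝒜.A (S i).M (N i).M r)

/-- the regular module -/
def Eg.toA (T : 𝒜.GMod) : (Eg (A := 𝒜.A) F r T.M T.M 0).M ≃ₗ[(Bg F 𝒜.A r T.M).A]
    (Bg F 𝒜.A r T.M).A := EE.toBBl F 𝒜.A r T.M

/-- augmentation map -/
def augL (T : 𝒜.GMod) : (Eg (A := 𝒜.A) F r T.M T.M 0).M →ₗ[(Bg F 𝒜.A r T.M).A]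
    ((Bg F 𝒜.A r T.M).A ⧸ (Bg F 𝒜.A r T.M).jideal) :=
  ((Bg F 𝒜.A r T.M).jideal.mkQ).comp (Eg.toA r T).toLinearMap

theorem augL_eq (T : 𝒜.GMod) (x : EE 𝒜.A r T.M T.M) :
    augL r T x = 0 ↔ EE.pr F r 0 x = 0 := by
  refine (Submodule.Quotient.mk_eq_zero (Bg F 𝒜.A r T.M).jideal).trans ((BB.mem_j F _).trans ?_)
  exact Eq.congr_left (EE.toBB_pr F _ _)

/-- augmentation -/
def augB (T : 𝒜.GMod) : GHom (Eg (A := 𝒜.A) F r T.M T.M 0) (Bt (Bg F 𝒜.A r T.M)) where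
  lin := augL r T
  grad j x hx := by
    by_cases hj : j = 0
    · subst hj; exact Bt_mem _ _
    · have : augL r T x = 0 := (augL_eq r T x).2 (hx 0 (by simpa using Ne.symm hj))
      exact Eq.subst (motive := fun z => z ∈ (Bt (Bg F 𝒜.A r T.M)).grading j) this.symm
        (Submodule.zero_mem ((Bt (Bg F 𝒜.A r T.M)).grading j))

theorem augB_eq (T : 𝒜.GMod) (x : EE 𝒜.A r T.M T.M) :
    (augB r T).lin x = 0 ↔ EE.pr F r 0 x = 0 := augL_eq r T x

theorem augB_surj (T : 𝒜.GMod) : Function.Surjective (augB r T).lin := by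
  have : Function.Surjective (augL r T) :=
    (Submodule.mkQ_surjective (Bg F 𝒜.A r T.M).jideal).comp (Eg.toA r T).surjective
  exact this

/-- the resolution -/
def resB
    (hret : ∀ i, ∃ (m : ℕ) (u : Fin m → ((S i).M →ₗ[𝒜.A] (S 0).M))
      (v : Fin m → ((S 0).M →ₗ[𝒜.A] (S i).M)), ∀ x, ∑ a, v a (u a x) = x)
    (hc : ∀ i (n m : ℕ) (h : r + n = m) (x : EX 𝒜.A (N i).M (S 0).M n),
      (c i).comp x h = 0 → x = 0)
    (hc0 : ∀ (n m : ℕ) (h : r + n = m) (x : EX 𝒜.A (S 0).M (S 0).M m),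
      ∃ y : EX 𝒜.A (N 0).M (S 0).M n, (c 0).comp y h = x)
    (hρ : ∀ i n, ∀ x : EX 𝒜.A (N i).M (S 0).M n, ∃ y : EX 𝒜.A (S (i + 1)).M (S 0).M n,
      (mk0 (ρ i)).comp y (zero_add n) = x)
    (hρ0 : ∀ i, ∀ x : EX 𝒜.A (S (i + 1)).M (S 0).M 0, (mk0 (ρ i)).comp x (zero_add 0) = 0 → x = 0)
    (hex : ∀ i (n m : ℕ) (h : r + n = m) (x : EX 𝒜.A (S (i + 1)).M (S 0).M m),
      (mk0 (ρ i)).comp x (zero_add m) = 0 ↔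
        ∃ y : EX 𝒜.A (N (i + 1)).M (S 0).M n, (c (i + 1)).comp y h = x) :
    MinRes (Bt (Bg F 𝒜.A r (S 0).M)) where
  P i := Eg F r (S i).M (S 0).M i
  d i := ⟨EE.df F (c i) (ρ i), fun j x hx => EE.df_gr F (c i) (ρ i) i j x (by
    have h : ((i + 1 : ℕ) : ℤ) = i + 1 := by push_cast; rfl
    rw [← h]; exact hx)⟩
  aug := augB r (S 0)
  fg i := by
    obtain ⟨m, u, v, h⟩ := hret i
    exact EE.ret_finite u v F h
  projective i := by
    obtain ⟨m, u, v, h⟩ := hret i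
    exact EE.ret_proj u v F h
  aug_surj := augB_surj r (S 0)
  exact_aug := by
    refine Submodule.ext fun z => ⟨?_, ?_⟩
    · rintro ⟨w, rfl⟩
      exact (augB_eq r (S 0) _).2 (EE.df_pr F (c 0) (ρ 0) w)
    · intro hz
      exact EE.range_df_of F (c 0) (ρ 0) (hρ 0) z ((augB_eq r (S 0) _).1 hz)
        fun n h => hc0 _ _ h _
  exact i := EE.df_exact F (c i) (ρ i) (c (i + 1)) (ρ (i + 1))
    (hc i) (hρ0 i) (hρ (i + 1)) (hex i)
  minimal i := by
    obtain ⟨m, u, v, h⟩ := hret i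
    rintro _ ⟨w, rfl⟩
    exact EE.ret_min F u v h (Bg F 𝒜.A r (S 0).M).jideal (BB.mem_j F) _
      (EE.df_pr F (c i) (ρ i) w)

end Res3
end GradedAlg

namespace GradedAlg

section Tow

open CategoryTheory CategoryTheory.Abelian

variable {F : Type} [Field F] {𝒜 : GradedAlg F}

/-- one stage of the construction -/
structure Stage (T : 𝒜.GMod) (e : ℕ → ℤ) (r : ℕ) where
  S : 𝒜.GMod
  N : 𝒜.GMod
  c : EX 𝒜.A S.M N.M r
  ret : ∃ (m : ℕ) (u : Fin m → (S.M →ₗ[𝒜.A] T.M)) (v : Fin m → (T.M →ₗ[𝒜.A] S.M)),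
    ∀ x, ∑ a, v a (u a x) = x
  lin : ∃ s : ℤ, Lin (fun n => e n + s) N
  inj : ∀ (n m : ℕ) (h : r + n = m) (x : EX 𝒜.A N.M T.M n), c.comp x h = 0 → x = 0

theorem Stage.next (hA : 𝒜.Standing) {T : 𝒜.GMod} (hT : IsTrivialGMod T) {e : ℕ → ℤ}
    (he : StrictMono e) (hTe : Lin e T) (he0 : e 0 = 0) (r : ℕ) (t : ℤ)
    (hr : ∀ n, e (n + (r + 1)) = e n + t) (σ : Stage T e (r + 1)) :
    ∃ (σ' : Stage T e (r + 1)) (ρ : σ.N.M →ₗ[𝒜.A] σ'.S.M),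
      (∀ n, ∀ x : EX 𝒜.A σ.N.M T.M n, ∃ y : EX 𝒜.A σ'.S.M T.M n,
        (mk0 ρ).comp y (zero_add n) = x) ∧
      (∀ x : EX 𝒜.A σ'.S.M T.M 0, (mk0 ρ).comp x (zero_add 0) = 0 → x = 0) ∧
      (∀ (n m : ℕ) (h : r + 1 + n = m) (x : EX 𝒜.A σ'.S.M T.M m),
        (mk0 ρ).comp x (zero_add m) = 0 ↔ ∃ y : EX 𝒜.A σ'.N.M T.M n, σ'.c.comp y h = x) := by
  obtain ⟨s, hs⟩ := σ.lin
  obtain ⟨S, N, ρ, c, h1, h2, h3, h4, h5, h6⟩ := main_lemma hA hT he hTe he0 r t hr hs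
  exact ⟨⟨S, N, c, h1, ⟨_, h2⟩, h5⟩, ρ, h3, h4, h6⟩

theorem koszul_of_lin (hA : 𝒜.Standing) {T : 𝒜.GMod} (hT : IsTrivialGMod T) {e : ℕ → ℤ}
    (he : StrictMono e) (hTe : Lin e T) (he0 : e 0 = 0) (r : ℕ) (t : ℤ)
    (hr : ∀ n, e (n + (r + 1)) = e n + t) :
    (Bg F 𝒜.A (r + 1) T.M).IsKoszulMod (Bt _) := by
  obtain ⟨N₀, c₀, hN, hc⟩ := hTe.shift_class hT.kill (r + 1) he
  have hN' : Lin (fun n => e n + t) N₀ := by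
    have : (fun n => e (n + (r + 1))) = fun n => e n + t := funext hr
    rw [← this]; exact hN
  let σ₀ : Stage T e (r + 1) := ⟨T, N₀, c₀, ⟨1, fun _ => LinearMap.id, fun _ => LinearMap.id,
    fun x => by simp⟩, ⟨t, hN'⟩, fun n m h x hx => (hc n m h).1 (hx.trans (Ext.comp_zero _ _ _ _ _).symm)⟩
  choose nx ρ h3 h4 h6 using Stage.next hA hT he hTe he0 r t hr
  let σ : ℕ → Stage T e (r + 1) := fun n => Nat.rec σ₀ (fun _ s => nx s) n
  refine ⟨resB (r + 1) (fun i => (σ i).S) (fun i => (σ i).N) (fun i => ρ (σ i)) (fun i => (σ i).c)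
    (fun i => (σ i).ret) (fun i => (σ i).inj) (fun n m h x => (hc n m h).2 x)
    (fun i => h3 (σ i)) (fun i => h4 (σ i)) (fun i => h6 (σ i)), ?_⟩
  intro i
  obtain ⟨m, u, v, h⟩ := (σ i).ret
  exact EE.ret_gen F u v h i

theorem jump_three (d n : ℕ) : jump d 3 n = n / 3 * d + n % 3 := by
  unfold jump
  congr 2
  omega

theorem jump_strict (d : ℕ) (hd : 3 ≤ d) : StrictMono fun n => (jump d 3 n : ℤ) := by
  refine strictMono_nat_of_lt_succ fun n => ?_
  rw [jump_three, jump_three]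
  norm_cast
  by_cases h : n % 3 = 2
  · have h1 : (n + 1) / 3 = n / 3 + 1 := by omega
    have h2 : (n + 1) % 3 = 0 := by omega
    rw [h1, h2, h, add_mul]; omega
  · have h1 : (n + 1) / 3 = n / 3 := by omega
    have h2 : (n + 1) % 3 = n % 3 + 1 := by omega
    rw [h1, h2]; omega

theorem jump_add (d k n : ℕ) : jump d 3 (n + 3 * k) = jump d 3 n + k * d := by
  rw [jump_three, jump_three]
  have h1 : (n + 3 * k) / 3 = n / 3 + k := by omega
  have h2 : (n + 3 * k) % 3 = n % 3 := by omega
  rw [h1, h2]; ring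

theorem koszul_B (hA : 𝒜.Standing) (d : ℕ) (hd : 3 ≤ d)
    (T : 𝒜.GMod) (hT : IsTrivialGMod T) (hpk : 𝒜.IsPKAlg 3 d T) (k : ℕ) (hk : 1 ≤ k) :
    (Bg F 𝒜.A (3 * k) T.M).IsKoszulMod (Bt _) := by
  obtain ⟨R, hR⟩ := hpk
  obtain ⟨r, hr⟩ : ∃ r, 3 * k = r + 1 := ⟨3 * k - 1, by omega⟩
  rw [hr]
  refine koszul_of_lin hA hT (jump_strict d hd) (lin_of_minRes R _ fun n => ?_) ?_ r (k * d) ?_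
  · have := hR n
    rwa [add_zero] at this
  · simp [jump_three]
  · intro n
    rw [← hr, jump_add]; push_cast; rfl

end Tow
end GradedAlg

namespace GradedAlg

section Cmp

open CategoryTheory CategoryTheory.Abelian

variable {F : Type} [Field F] {𝒜 : GradedAlg F} {T : 𝒜.GMod}

theorem mk0_smul {A : Type} [Ring A] [Algebra F A] {X Y : Type} [AddCommGroup X] [Module A X]
    [AddCommGroup Y] [Module A Y] [Module F Y] [IsScalarTower F A Y] [SMulCommClass A F Y]
    (s : F) (f : X →ₗ[A] Y) : mk0 (s • f) = s • mk0 f := by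
  unfold mk0
  rw [← Ext.mk₀_smul]
  congr 1
  ext x
  change s • f x = _
  rw [← algebraMap_smul A s (f x)]
  rfl

variable (R : MinRes T)

/-- cokernels of the resolution -/
abbrev Ck (n : ℕ) : Type := (R.P n).M ⧸ LinearMap.range (R.d n).lin

/-- the inclusion of the next syzygy -/
def Cki (n : ℕ) : Ck R (n + 1) →ₗ[𝒜.A] (R.P n).M :=
  Submodule.liftQ _ (R.d n).lin (R.exact n).le

/-- the projection -/
def Ckp (n : ℕ) : (R.P n).M →ₗ[𝒜.A] Ck R n := (LinearMap.range (R.d n).lin).mkQ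

theorem Cki_mk (n : ℕ) (x : (R.P (n + 1)).M) : Cki R n (Ckp R (n + 1) x) = (R.d n).lin x := rfl

theorem Ckp_surj (n : ℕ) : Function.Surjective (Ckp R n) := Submodule.mkQ_surjective _

theorem Ckp_d (n : ℕ) (x) : Ckp R n ((R.d n).lin x) = 0 :=
  (Submodule.Quotient.mk_eq_zero _).2 ⟨x, rfl⟩

theorem Ck_ex (n : ℕ) : Ex3 (Cki R n) (Ckp R n) where
  inj := by
    rw [← LinearMap.ker_eq_bot]
    exact Submodule.ker_liftQ_eq_bot _ _ _ (R.exact n).ge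
  surj := Ckp_surj R n
  exact x := by
    refine (Submodule.Quotient.mk_eq_zero _).trans ⟨?_, ?_⟩
    · rintro ⟨y, rfl⟩; exact ⟨Ckp R (n + 1) y, rfl⟩
    · rintro ⟨y, rfl⟩
      obtain ⟨z, rfl⟩ := Ckp_surj R (n + 1) y
      exact ⟨z, rfl⟩

/-- the isomorphism of the zeroth cokernel with the module -/
def Ckw : Ck R 0 ≃ₗ[𝒜.A] T.M :=
  LinearEquiv.ofBijective (Submodule.liftQ _ R.aug.lin R.exact_aug.le) ⟨by
    rw [← LinearMap.ker_eq_bot]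
    exact Submodule.ker_liftQ_eq_bot _ _ _ R.exact_aug.ge, by
    intro y
    obtain ⟨x, rfl⟩ := R.aug_surj y
    exact ⟨Ckp R 0 x, rfl⟩⟩

theorem Ckw_mk (x : (R.P 0).M) : (Ckw R).symm (R.aug.lin x) = Ckp R 0 x := by
  rw [LinearEquiv.symm_apply_eq]; rfl

/-- the iterated extension class -/
def Cko : (n : ℕ) → EX 𝒜.A T.M (Ck R n) n
  | 0 => mk0 (Ckw R).symm.toLinearMap
  | n + 1 => (Cko n).comp (Ck_ex R n).cls rfl

variable (hT : Kill 𝒜 T.M)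

theorem kill_d (hT : Kill 𝒜 T.M) (n : ℕ) (f : (R.P n).M →ₗ[𝒜.A] T.M) (x) :
    f ((R.d n).lin x) = 0 := by
  have h : (𝒜.jideal • (⊤ : Submodule 𝒜.A (R.P n).M)) ≤ LinearMap.ker f := by
    rw [Submodule.smul_le]
    intro a ha y _
    rw [LinearMap.mem_ker, map_smul]
    exact hT a ha _
  exact h (R.minimal n ⟨x, rfl⟩)

theorem Cko_bij (hT : Kill 𝒜 T.M) (n : ℕ) : ∀ (m l : ℕ) (h : n + m = l),
    Function.Bijective (fun y : EX 𝒜.A (Ck R n) T.M m => (Cko R n).comp y h) := by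
  induction n with
  | zero =>
    intro m l h
    obtain rfl : m = l := by omega
    constructor
    · intro x y hxy
      have hxy' : (mk0 (Ckw R).symm.toLinearMap).comp x (zero_add m) =
        (mk0 (Ckw R).symm.toLinearMap).comp y (zero_add m) := hxy
      have := congrArg (fun z => (mk0 (Ckw R).toLinearMap).comp z (zero_add m)) hxy'
      simp only [mk0_comp_assoc, LinearEquiv.symm_comp, mk0_id_comp] at this
      exact this
    · intro y
      refine ⟨(mk0 (Ckw R).toLinearMap).comp y (zero_add m), ?_⟩
      change (mk0 (Ckw R).symm.toLinearMap).comp _ (zero_add m) = y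
      rw [mk0_comp_assoc, LinearEquiv.comp_symm, mk0_id_comp]
  | succ n ih =>
    intro m l h
    have hp := R.projective n
    have h1 : Function.Bijective (fun y : EX 𝒜.A (Ck R (n + 1)) T.M m =>
        (Ck_ex R n).cls.comp y (add_comm 1 m)) := by
      constructor
      · intro x y hxy
        rw [← sub_eq_zero]
        refine (Ck_ex R n).shift_inj (fun f => ?_) (add_comm 1 m) _ ?_
        · refine LinearMap.ext fun z => ?_
          obtain ⟨z, rfl⟩ := Ckp_surj R (n + 1) z
          exact kill_d R hT n f z
        · rw [sub_eq_add_neg, Ext.comp_add, Ext.comp_neg]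
          exact add_neg_eq_zero.2 hxy
      · intro x
        exact (Ck_ex R n).shift_surj _ x
    have h2 := (ih (m + 1) l (by omega)).comp h1
    refine Eq.subst (motive := fun q => Function.Bijective q) (funext fun y => ?_) h2
    exact (Ext.comp_assoc (Cko R n) (Ck_ex R n).cls y rfl (add_comm 1 m) (by omega)).symm

/-- the map induced by a cocycle -/
def Ckf {n : ℕ} (f : cocyc T R n) : Ck R n →ₗ[𝒜.A] T.M :=
  Submodule.liftQ _ f.1 (by
    rintro _ ⟨y, rfl⟩
    exact LinearMap.congr_fun f.2 y)

theorem Ckf_mk {n : ℕ} (f : cocyc T R n) (x) : Ckf R f (Ckp R n x) = f.1 x := rfl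

theorem Ck_hom_ext {n : ℕ} {Z : Type} [AddCommGroup Z] [Module 𝒜.A Z] {f g : Ck R n →ₗ[𝒜.A] Z}
    (h : ∀ x, f (Ckp R n x) = g (Ckp R n x)) : f = g := by
  refine LinearMap.ext fun z => ?_
  obtain ⟨z, rfl⟩ := Ckp_surj R n z
  exact h z

/-- comparison on cocycles -/
def Psi0 (n : ℕ) : cocyc T R n →ₗ[F] EX 𝒜.A T.M T.M n where
  toFun f := (Cko R n).comp (mk0 (Ckf R f)) (add_zero n)
  map_add' f g := by
    have : Ckf R (f + g) = Ckf R f + Ckf R g := Ck_hom_ext R fun x => rfl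
    rw [this, mk0_add, Ext.comp_add]
  map_smul' s f := by
    have : Ckf R (s • f) = s • Ckf R f := Ck_hom_ext R fun x => rfl
    rw [this, mk0_smul, Ext.comp_smul]; rfl

theorem mem_cocyc (hT : Kill 𝒜 T.M) {n : ℕ} (f : HomSp T R n) : f ∈ cocyc T R n :=
  LinearMap.ext fun x => kill_d R hT n f x

theorem extRel_le (hT : Kill 𝒜 T.M) (n : ℕ) : extRel T R n ≤ LinearMap.ker (Psi0 R n) := by
  rintro ⟨f, hf⟩ h
  have h0 : f = 0 := by
    cases n with
    | zero => exact h
    | succ n =>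
      obtain ⟨g, hg⟩ := h
      rw [Submodule.subtype_apply] at hg
      exact hg.symm.trans (LinearMap.ext fun x => kill_d R hT n g x)
  subst h0
  exact map_zero (Psi0 R n)

theorem Psi0_inj (hT : Kill 𝒜 T.M) (n : ℕ) : LinearMap.ker (Psi0 R n) = ⊥ := by
  rw [LinearMap.ker_eq_bot]
  intro f g h
  have h1 := mk0_inj ((Cko_bij R hT n 0 n (add_zero n)).1 h)
  refine Subtype.ext (LinearMap.ext fun x => ?_)
  exact LinearMap.congr_fun h1 (Ckp R n x)

theorem Psi0_surj (hT : Kill 𝒜 T.M) (n : ℕ) : Function.Surjective (Psi0 R n) := by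
  intro y
  obtain ⟨z, rfl⟩ := (Cko_bij R hT n 0 n (add_zero n)).2 y
  obtain ⟨h, rfl⟩ := mk0_surj z
  refine ⟨⟨h ∘ₗ Ckp R n, mem_cocyc R hT _⟩, ?_⟩
  have : Ckf R ⟨h ∘ₗ Ckp R n, mem_cocyc R hT _⟩ = h := Ck_hom_ext R fun x => rfl
  exact congrArg (fun q => (Cko R n).comp (mk0 q) (add_zero n)) this

/-- comparison of the two models of Ext -/
def Psi (hT : Kill 𝒜 T.M) (n : ℕ) : ExtQ T R n ≃ₗ[F] EX 𝒜.A T.M T.M n :=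
  LinearEquiv.ofBijective (Submodule.liftQ _ (Psi0 R n) (extRel_le R hT n)) ⟨by
    rw [← LinearMap.ker_eq_bot]
    refine Submodule.ker_liftQ_eq_bot _ _ _ ?_
    rw [Psi0_inj R hT n]; exact bot_le, by
    intro y
    obtain ⟨x, rfl⟩ := Psi0_surj R hT n y
    exact ⟨Submodule.Quotient.mk x, rfl⟩⟩

theorem Psi_cls (hT : Kill 𝒜 T.M) (n : ℕ) {f : HomSp T R n} (hf : f ∈ cocyc T R n) :
    Psi R hT n (extCls T hf) = (Cko R n).comp (mk0 (Ckf R ⟨f, hf⟩)) (add_zero n) := rfl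

/-- map induced by a chain map -/
def Ckl {j : ℕ} {g : (R.P j).M →ₗ[𝒜.A] T.M} (L : ChainLift T R R j g) (m k : ℕ) (h : m = k + j) :
    Ck R m →ₗ[𝒜.A] Ck R k :=
  Submodule.liftQ _ (Ckp R k ∘ₗ L.ℓ m k h) (by
    subst h
    rintro _ ⟨y, rfl⟩
    rw [LinearMap.mem_ker, LinearMap.comp_apply]
    have := LinearMap.congr_fun (L.comm k) y
    refine (congrArg (Ckp R k) this.symm).trans ?_
    exact Ckp_d R k _)

theorem Ckl_mk {j : ℕ} {g : (R.P j).M →ₗ[𝒜.A] T.M} (L : ChainLift T R R j g) (m k : ℕ)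
    (h : m = k + j) (x) : Ckl R L m k h (Ckp R m x) = Ckp R k (L.ℓ m k h x) := rfl

theorem Cko_lift {j : ℕ} {g : (R.P j).M →ₗ[𝒜.A] T.M} (hg : g ∈ cocyc T R j)
    (L : ChainLift T R R j g) (k : ℕ) : ∀ (m : ℕ) (h : m = k + j),
    (Cko R m).comp (mk0 (Ckl R L m k h)) (add_zero m) =
      ((Cko R j).comp (mk0 (Ckf R ⟨g, hg⟩)) (add_zero j)).comp (Cko R k) (by omega) := by
  induction k with
  | zero =>
    intro m h
    obtain rfl : m = j := by omega
    have h1 : Ckl R L m 0 h = (Ckw R).symm.toLinearMap ∘ₗ Ckf R ⟨g, hg⟩ := by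
      refine Ck_hom_ext R fun x => ?_
      rw [Ckl_mk]
      have := LinearMap.congr_fun L.comm_aug x
      rw [← Ckw_mk]
      exact congrArg (Ckw R).symm this
    rw [h1, ← mk0_comp]
    exact (Ext.comp_assoc (Cko R m) _ _ _ _ (by omega)).symm
  | succ k ih =>
    intro m h
    obtain rfl : m = k + j + 1 := by omega
    have h1 := ih (k + j) rfl
    have h2 := (Ck_ex R (k + j)).cls_nat (Ck_ex R k) (Ckl R L (k + j + 1) (k + 1) h)
      (L.ℓ (k + j) k rfl) (Ckl R L (k + j) k rfl) (Ck_hom_ext R fun x =>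
        (LinearMap.congr_fun (L.comm k) x).symm) (LinearMap.ext fun x => rfl)
    have h3 : (Cko R (k + j + 1)).comp (mk0 (Ckl R L (k + j + 1) (k + 1) h)) (add_zero _) =
        (Cko R (k + j)).comp ((Ck_ex R (k + j)).cls.comp
          (mk0 (Ckl R L (k + j + 1) (k + 1) h)) (add_zero 1)) rfl :=
      Ext.comp_assoc (Cko R (k + j)) (Ck_ex R (k + j)).cls _ rfl _ (by omega)
    rw [h3, h2]
    have h4 : (Cko R (k + j)).comp ((mk0 (Ckl R L (k + j) k rfl)).comp (Ck_ex R k).cls (zero_add 1))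
        rfl = ((Cko R (k + j)).comp (mk0 (Ckl R L (k + j) k rfl)) (add_zero _)).comp
          (Ck_ex R k).cls rfl := (Ext.comp_assoc _ _ _ _ _ (by omega)).symm
    rw [h4, h1]
    exact Ext.comp_assoc _ (Cko R k) (Ck_ex R k).cls _ rfl (by omega)

theorem Psi_mul (hT : Kill 𝒜 T.M) (i j : ℕ) {f : HomSp T R i} (hf : f ∈ cocyc T R i)
    {g : HomSp T R j} (hg : g ∈ cocyc T R j) (L : ChainLift T R R j g)
    (hc : f ∘ₗ L.ℓ (i + j) i (by omega) ∈ cocyc T R (i + j)) :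
    Psi R hT (i + j) (extCls T hc) =
      (Psi R hT j (extCls T hg)).comp (Psi R hT i (extCls T hf)) (add_comm j i) := by
  rw [Psi_cls, Psi_cls, Psi_cls]
  have h1 : Ckf R ⟨_, hc⟩ = Ckf R ⟨f, hf⟩ ∘ₗ Ckl R L (i + j) i rfl := Ck_hom_ext R fun x => rfl
  rw [h1, ← mk0_comp]
  have h2 := Cko_lift R hg L i (i + j) rfl
  have h3 : (Cko R (i + j)).comp ((mk0 (Ckl R L (i + j) i rfl)).comp (mk0 (Ckf R ⟨f, hf⟩))
      (zero_add 0)) (add_zero _) = ((Cko R (i + j)).comp (mk0 (Ckl R L (i + j) i rfl))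
      (add_zero _)).comp (mk0 (Ckf R ⟨f, hf⟩)) (add_zero _) := (Ext.comp_assoc _ _ _ _ _ (by omega)).symm
  rw [h3, h2]
  exact Ext.comp_assoc _ (Cko R i) _ _ _ (by omega)

theorem lift_step {m k : ℕ} (a : (R.P m).M →ₗ[𝒜.A] (R.P k).M)
    (ha : ∀ x, a ((R.d m).lin x) ∈ LinearMap.range (R.d k).lin) :
    ∃ b : (R.P (m + 1)).M →ₗ[𝒜.A] (R.P (k + 1)).M, (R.d k).lin ∘ₗ b = a ∘ₗ (R.d m).lin ∧
      ∀ x, b ((R.d (m + 1)).lin x) ∈ LinearMap.range (R.d (k + 1)).lin := by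
  have hp := R.projective (m + 1)
  obtain ⟨b, hb⟩ := Module.projective_lifting_property (R.d k).lin.rangeRestrict
    (LinearMap.codRestrict _ (a ∘ₗ (R.d m).lin) ha) (LinearMap.surjective_rangeRestrict _)
  have hb' : ∀ x, (R.d k).lin (b x) = a ((R.d m).lin x) := fun x =>
    congrArg Subtype.val (LinearMap.congr_fun hb x)
  refine ⟨b, LinearMap.ext hb', fun x => ?_⟩
  rw [R.exact k, LinearMap.mem_ker, hb']
  have : (R.d (m + 1)).lin x ∈ LinearMap.ker (R.d m).lin := by
    rw [← R.exact m]; exact ⟨x, rfl⟩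
  rw [LinearMap.mem_ker.1 this, map_zero]

theorem exists_lift (hT : Kill 𝒜 T.M) (j : ℕ) (g : (R.P j).M →ₗ[𝒜.A] T.M) :
    Nonempty (ChainLift T R R j g) := by
  have hp := R.projective j
  obtain ⟨a0, ha0⟩ := Module.projective_lifting_property R.aug.lin g R.aug_surj
  have h0 : ∀ x, a0 ((R.d j).lin x) ∈ LinearMap.range (R.d 0).lin := by
    intro x
    rw [R.exact_aug, LinearMap.mem_ker]
    exact (LinearMap.congr_fun ha0 _).trans (kill_d R hT j g x)
  choose nx h1 h2 using fun (k : ℕ) (a : (R.P (j + k)).M →ₗ[𝒜.A] (R.P k).M) ha =>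
    lift_step R (m := j + k) (k := k) a ha
  let q : (k : ℕ) → {a : (R.P (j + k)).M →ₗ[𝒜.A] (R.P k).M //
      ∀ x, a ((R.d (j + k)).lin x) ∈ LinearMap.range (R.d k).lin} := fun k =>
    Nat.rec ⟨a0, h0⟩ (fun k a => ⟨nx k a.1 a.2, h2 k a.1 a.2⟩) k
  let l : ∀ m k : ℕ, m = j + k → ((R.P m).M →ₗ[𝒜.A] (R.P k).M) := fun m k h =>
    Eq.rec (motive := fun m _ => ((R.P m).M →ₗ[𝒜.A] (R.P k).M)) (q k).1 h.symm
  have hl : ∀ k m (h : m = j + k), (R.d k).lin ∘ₗ l (m + 1) (k + 1) (by omega) =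
      l m k h ∘ₗ (R.d m).lin := by
    intro k m h
    subst h
    exact h1 k (q k).1 (q k).2
  exact ⟨⟨fun m k h => l m k (by omega), ha0, fun k => hl k (k + j) (by omega)⟩⟩

theorem Psi_cast (hT : Kill 𝒜 T.M) {a b p q : ℕ} (h : a = b) (z : ExtQ T R a)
    (x : EX 𝒜.A T.M T.M p) (y : EX 𝒜.A T.M T.M q) (h1 : p + q = a) (h2 : p + q = b)
    (hz : Psi R hT a z = x.comp y h1) : Psi R hT b (extCast T R h z) = x.comp y h2 := by
  subst h
  exact hz

theorem Psi_mu (hT : Kill 𝒜 T.M)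
    (μ : ∀ i j : ℕ, ExtQ T R i →ₗ[F] ExtQ T R j →ₗ[F] ExtQ T R (i + j))
    (hμ : IsYonedaMul T R R μ) (i j : ℕ) (x : ExtQ T R i) (y : ExtQ T R j) :
    Psi R hT (i + j) (μ i j x y) = (Psi R hT j y).comp (Psi R hT i x) (add_comm j i) := by
  obtain ⟨⟨f, hf⟩, rfl⟩ := Submodule.mkQ_surjective _ x
  obtain ⟨⟨g, hg⟩, rfl⟩ := Submodule.mkQ_surjective _ y
  obtain ⟨L⟩ := exists_lift R hT j g
  have hc := mem_cocyc R hT (f ∘ₗ L.ℓ (i + j) i (by omega))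
  exact (congrArg (Psi R hT (i + j)) (hμ i j f hf g hg L hc)).trans (Psi_mul R hT i j hf hg L hc)

end Cmp
end GradedAlg

namespace GradedAlg

section Fin

open CategoryTheory CategoryTheory.Abelian

variable {F : Type} [Field F] {𝒜 : GradedAlg F} {T : 𝒜.GMod}

theorem BB.of_inj {A : Type} [Ring A] [Algebra F A] {r : ℕ} {X : Type} [AddCommGroup X]
    [Module A X] (n : ℕ) : Function.Injective (BB.of F (A := A) (T := X) r n) := by
  intro x y h
  have := congrArg (BB.pr F r n) h
  rwa [BB.pr_of, BB.pr_of] at this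

variable (R : MinRes T)

/-- the comparison for one component -/
def phi (hT : Kill 𝒜 T.M) (r n : ℕ) :
    ↥((Bg F 𝒜.A r T.M).grading n) ≃ₗ[F] ExtQ T R (r * n) :=
  (LinearEquiv.ofInjective (BB.of F (A := 𝒜.A) (T := T.M) r n) (BB.of_inj n)).symm.trans
    (Psi R hT (r * n)).symm

theorem phi_of (hT : Kill 𝒜 T.M) (r n : ℕ) (x : Ef 𝒜.A r T.M T.M n) (h) :
    phi R hT r n ⟨BB.of F r n x, h⟩ = (Psi R hT (r * n)).symm x := by
  refine congrArg (Psi R hT (r * n)).symm ?_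
  exact (LinearEquiv.ofInjective (BB.of F (A := 𝒜.A) (T := T.M) r n)
    (BB.of_inj n)).symm_apply_apply x

theorem Ef.mul_def {A : Type} [Ring A] {r : ℕ} {X : Type} [AddCommGroup X] [Module A X]
    {m n : ℕ} (x : Ef A r X X m) (y : Ef A r X X n) (h : r * n + r * m = r * (m + n)) :
    Ef.mul x y = (show EX A X X (r * (m + n)) from (show EX A X X (r * n) from y).comp
      (show EX A X X (r * m) from x) h) := by
  unfold Ef.mul; rfl

theorem phi_mul (hT : Kill 𝒜 T.M)
    (μ : ∀ i j : ℕ, ExtQ T R i →ₗ[F] ExtQ T R j →ₗ[F] ExtQ T R (i + j))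
    (hμ : IsYonedaMul T R R μ) (r m n : ℕ) (x : ↥((Bg F 𝒜.A r T.M).grading m))
    (y : ↥((Bg F 𝒜.A r T.M).grading n)) (h : r * m + r * n = r * (m + n)) (h') :
    phi R hT r (m + n) ⟨(x : (Bg F 𝒜.A r T.M).A) * (y : (Bg F 𝒜.A r T.M).A), h'⟩ =
      extCast T R h (μ (r * m) (r * n) (phi R hT r m x) (phi R hT r n y)) := by
  obtain ⟨_, a, rfl⟩ := x
  obtain ⟨_, b, rfl⟩ := y
  have e1 := phi_of R hT r m a ⟨a, rfl⟩
  have e2 := phi_of R hT r n b ⟨b, rfl⟩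
  refine Eq.trans ?_ (congrArg₂ (fun u v => extCast T R h (μ (r * m) (r * n) u v)) e1 e2).symm
  have e3 : phi R hT r (m + n) ⟨BB.of F r m a * BB.of F r n b, h'⟩ =
      phi R hT r (m + n) ⟨BB.of F r (m + n) (Ef.mul a b), ⟨_, rfl⟩⟩ :=
    congrArg _ (Subtype.ext (BB.of_mul F a b))
  refine e3.trans ((phi_of R hT r (m + n) _ _).trans ?_)
  refine (LinearEquiv.symm_apply_eq (Psi R hT (r * (m + n)))).2 ?_
  refine (Ef.mul_def a b (by ring)).trans ?_
  refine (Psi_cast R hT h _ _ _ (add_comm _ _) _ ?_).symm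
  refine (Psi_mu R hT μ hμ _ _ _ _).trans ?_
  exact congrArg₂ (fun (u : EX 𝒜.A T.M T.M (r * n)) (v : EX 𝒜.A T.M T.M (r * m)) =>
    u.comp v (add_comm (r * n) (r * m)))
    ((Psi R hT (r * n)).apply_symm_apply b) ((Psi R hT (r * m)).apply_symm_apply a)

end Fin
end GradedAlg

open GradedAlg in
/-- **Theorem 2.8(2).** Let `A` be piecewise-Koszul with period `p = 3` and jump degree
`d`.  Then for every `k ≥ 1` the algebra `E_k(A) = ⊕_{n≥0} Ext^{3kn}_A(A_0,A_0)`
(with Yoneda multiplication, graded by `n`) is a Koszul algebra: there is a graded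
algebra `B` whose components correspond to the `Ext^{3kn}` and whose multiplication
corresponds to the Yoneda product, such that the trivial `B`-module admits a minimal
graded projective resolution with `n`-th term generated in degree `n`. -/
theorem ext_subalgebra_isKoszul
    {F : Type} [Field F] (𝒜 : GradedAlg F) (hA : 𝒜.Standing)
    (d : ℕ) (hd : 3 ≤ d)
    (T : 𝒜.GMod) (hT : IsTrivialGMod T) (hpk : 𝒜.IsPKAlg 3 d T)
    (R : MinRes T)
    (μ : ∀ i j : ℕ, ExtQ T R i →ₗ[F] ExtQ T R j →ₗ[F] ExtQ T R (i + j))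
    (hμ : IsYonedaMul T R R μ)
    (k : ℕ) (hk : 1 ≤ k) :
    ∃ (B : GradedAlg F) (φ : ∀ n : ℕ, ↥(B.grading n) ≃ₗ[F] ExtQ T R (3 * k * n)),
      (∀ (m n : ℕ) (x : ↥(B.grading m)) (y : ↥(B.grading n)),
        φ (m + n) ⟨(x : B.A) * (y : B.A), SetLike.mul_mem_graded x.2 y.2⟩ =
          extCast T R (by ring) (μ (3 * k * m) (3 * k * n) (φ m x) (φ n y))) ∧
      ∃ T' : B.GMod, IsTrivialGMod T' ∧ B.IsKoszulMod T' := by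
  refine ⟨Bg F 𝒜.A (3 * k) T.M, phi R hT.kill (3 * k), fun m n x y => ?_, Bt _, Bt_trivial _,
    koszul_B hA d hd T hT hpk k hk⟩
  exact phi_mul R hT.kill μ hμ (3 * k) m n x y _ _
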